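/- arXiv:1610.07945 — 3 statements merged into one kernel-verified Lean document; each statement's English description precedes it below -/
import Mathlib

section
/- Let N ≥ 1 be an odd integer, let 0 < a ≤ 1, and let b⁻ ∈ [0, 1/2) and b⁺ ∈ [1/2, 1) be roots of the Bernoulli polynomial B_{N+1} (such roots exist and are unique in those intervals). Then the Hurwitz zeta function σ ↦ ζ(σ, a) has a real zero in the open interval (-N-1, -N) if and only if b⁻ < a < 1/2 or b⁺ < a < 1. -/
open HurwitzZeta Polynomial Set

/-- The `n`-th Bernoulli polynomial evaluated at a real number. -/
noncomputable def bernoulliPoly (n : ℕ) (x : ℝ) : ℝ := Polynomial.aeval x (Polynomial.bernoulli n)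

/-!
Let `0 < α < 1`. As a function of `a` on the circle, `ζ(-n + α, a)` is a positive multiple of
Marchaud's fractional derivative of order `α` of `f = ζ(-n, ·)`, hence of
`∫ u in (0, ∞), u ^ (-α - 1) * (f a - f (a - u))`; this is seen by expanding both sides in Fourier
series through Hurwitz's formula. Moreover `f` is a negative multiple of the periodized Bernoulli
polynomial `B_{n+1}`. For `n = N + 1` it is odd and resembles, up to sign, a sine with its crest at
`b⁻`. Hence, for `a` in `[0, b⁻]` or `[1/2, b⁺]`, the difference `f a - f (a - u)` changes sign at
most once per period and its mean has the sign it starts with, so that the decreasing weight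
`u ^ (-α - 1)` forces the integral to have that sign too, and there is no zero. For all other `a`
the values of `ζ(·, a)` at `-N - 1` and `-N` have opposite signs.
-/

section

open Complex MeasureTheory Filter Topology

section Mellin

variable {r w : ℂ}

lemma norm_cexp_neg_mul_le_one (hr : 0 ≤ r.re) {u : ℝ} (hu : 0 ≤ u) :
    ‖cexp (-(r * u))‖ ≤ 1 := by
  rw [norm_exp, Real.exp_le_one_iff]
  simpa using mul_nonneg hr hu

lemma mellinConvergent_one_sub_cexp (hr : 0 ≤ r.re) (hw : -1 < w.re) (hw' : w.re < 0) :
    MellinConvergent (fun u : ℝ ↦ 1 - cexp (-(r * u))) w := by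
  refine mellinConvergent_of_isBigO_rpow (a := 0) (b := -1) ?_ ?_ (by simpa) ?_ hw
  · exact (by fun_prop : Continuous fun u : ℝ ↦ 1 - cexp (-(r * u))).locallyIntegrable
      |>.locallyIntegrableOn _
  · refine .of_bound 2 ?_
    filter_upwards [eventually_ge_atTop 0] with u hu
    have := norm_sub_le 1 (cexp (-(r * u)))
    simpa using this.trans (add_le_add norm_one.le (norm_cexp_neg_mul_le_one hr hu)) |>.trans_eq
      one_add_one_eq_two
  · have hderiv : HasDerivAt (fun u : ℝ ↦ 1 - cexp (-(r * u))) (-(cexp (-(r * (0 : ℝ))) * -(r * 1)))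
        0 := ((((hasDerivAt_id (0 : ℝ)).ofReal_comp.const_mul r).neg).cexp).const_sub 1
    simpa using hderiv.isBigO_sub.mono nhdsWithin_le_nhds

lemma differentiableAt_mellin_one_sub_cexp (hr : 0 < r.re) (hw : -1 < w.re) (hw' : w.re < 0) :
    DifferentiableAt ℂ (fun z : ℂ ↦ mellin (fun u : ℝ ↦ 1 - cexp (-(z * u))) w) r := by
  have hopen (c : ℝ) : IsOpen {z : ℂ | c < z.re} := isOpen_lt continuous_const continuous_re
  have hmeas : AEStronglyMeasurable
      (fun u : ℝ ↦ (u : ℂ) ^ (w - 1) • (u * cexp (-(r * u)))) (volume.restrict (Ioi 0)) :=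
    (ContinuousOn.smul (fun u hu ↦ (continuousAt_ofReal_cpow_const _ _
      (.inr (ne_of_gt hu))).continuousWithinAt) (by fun_prop)).aestronglyMeasurable
      measurableSet_Ioi
  refine (hasDerivAt_integral_of_dominated_loc_of_deriv_le
    (F := fun z (u : ℝ) ↦ (u : ℂ) ^ (w - 1) • (1 - cexp (-(z * u))))
    (F' := fun z (u : ℝ) ↦ (u : ℂ) ^ (w - 1) • (u * cexp (-(z * u))))
    (bound := fun u ↦ u ^ w.re * Real.exp (-(r.re / 2) * u ^ (1 : ℝ)))
    ((hopen _).mem_nhds (half_lt_self hr)) ?_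
    (mellinConvergent_one_sub_cexp hr.le hw hw') hmeas ?_
    (integrableOn_rpow_mul_exp_neg_mul_rpow hw one_pos (half_pos hr)) ?_).2.differentiableAt
  · filter_upwards [(hopen _).mem_nhds hr] with z hz
    exact (mellinConvergent_one_sub_cexp (le_of_lt hz) hw hw').aestronglyMeasurable
  · refine (ae_restrict_iff' measurableSet_Ioi).2 (.of_forall fun u (hu : 0 < u) z hz ↦ ?_)
    rw [norm_smul, norm_mul, norm_cpow_eq_rpow_re_of_pos hu, norm_real, Real.norm_of_nonneg hu.le,
      ← mul_assoc, sub_re, one_re, Real.rpow_sub_one hu.ne', div_mul_cancel₀ _ hu.ne', norm_exp,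
      Real.rpow_one]
    gcongr
    simpa using mul_le_mul_of_nonneg_right (le_of_lt hz) hu.le
  · refine .of_forall fun u z _ ↦ ?_
    convert! (((((hasDerivAt_id z).mul_const (u : ℂ)).neg).cexp).const_sub 1).const_mul
      ((u : ℂ) ^ (w - 1)) using 1
    simp [mul_comm]

/-- The Mellin transform of `u ↦ 1 - exp (-u)` at `w`, equal to `-Γ w` in the strip
`-1 < Re w < 0`. -/
noncomputable def mellinOneSubExp (w : ℂ) : ℂ := mellin (fun u : ℝ ↦ 1 - cexp (-u)) w

lemma mellin_one_sub_cexp_of_pos {x : ℝ} (hx : 0 < x) (w : ℂ) :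
    mellin (fun u : ℝ ↦ 1 - cexp (-(x * u))) w = (x : ℂ) ^ (-w) * mellinOneSubExp w := by
  simpa [mellinOneSubExp] using mellin_comp_mul_left (fun u : ℝ ↦ 1 - cexp (-u)) w hx

lemma mellin_one_sub_cexp_of_re_pos (hr : 0 < r.re) (hw : -1 < w.re) (hw' : w.re < 0) :
    mellin (fun u : ℝ ↦ 1 - cexp (-(r * u))) w = r ^ (-w) * mellinOneSubExp w := by
  have hopen : IsOpen {z : ℂ | 0 < z.re} := isOpen_lt continuous_const continuous_re
  have hreal : ∃ᶠ z : ℂ in 𝓝[≠] 1, mellin (fun u : ℝ ↦ 1 - cexp (-(z * u))) w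
      = z ^ (-w) * mellinOneSubExp w := by
    have htendsto : Tendsto ((↑) : ℝ → ℂ) (𝓝[≠] 1) (𝓝[≠] 1) :=
      continuous_ofReal.continuousAt.continuousWithinAt.tendsto_nhdsWithin (by simp [MapsTo])
    refine htendsto.frequently (Eventually.frequently ?_)
    filter_upwards [nhdsWithin_le_nhds (Ioi_mem_nhds one_pos)] with x hx
    exact mellin_one_sub_cexp_of_pos hx w
  refine AnalyticOnNhd.eqOn_of_preconnected_of_frequently_eq
    (f := fun z : ℂ ↦ mellin (fun u : ℝ ↦ 1 - cexp (-(z * u))) w)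
    (DifferentiableOn.analyticOnNhd (fun z hz ↦
      (differentiableAt_mellin_one_sub_cexp hz hw hw').differentiableWithinAt) hopen)
    (DifferentiableOn.analyticOnNhd (fun z hz ↦ ?_) hopen)
    (convex_halfSpace_re_gt 0).isPreconnected (z₀ := 1)
    (zero_lt_one (α := ℝ)) hreal hr
  exact ((differentiableAt_id.cpow_const (.inl hz)).mul_const _).differentiableWithinAt

lemma norm_one_sub_cexp_add_mul_le (hr : 0 ≤ r.re) {ε u : ℝ} (hε : 0 ≤ ε) (hε' : ε ≤ 1)
    (hu : 0 ≤ u) :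
    ‖1 - cexp (-((r + ε) * u))‖ ≤ ‖1 - cexp (-(r * u))‖ + ‖1 - cexp (-(1 * u))‖ := by
  have hnorm : ‖cexp (-(r * u))‖ ≤ 1 := norm_cexp_neg_mul_le_one hr hu
  have hreal (x : ℝ) (hx : 0 ≤ x) : ‖1 - cexp (-(x * u))‖ = 1 - Real.exp (-(x * u)) := by
    have : Real.exp (-(x * u)) ≤ 1 := Real.exp_le_one_iff.2 (by simpa using mul_nonneg hx hu)
    exact_mod_cast Real.norm_of_nonneg (sub_nonneg.2 this)
  calc ‖1 - cexp (-((r + ε) * u))‖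
      = ‖(1 - cexp (-(r * u))) + cexp (-(r * u)) * (1 - cexp (-(ε * u)))‖ := by
        rw [add_mul, neg_add, Complex.exp_add]
        ring_nf
    _ ≤ ‖1 - cexp (-(r * u))‖ + 1 * ‖1 - cexp (-(ε * u))‖ := by
        grw [norm_add_le, norm_mul, hnorm]
    _ ≤ ‖1 - cexp (-(r * u))‖ + ‖1 - cexp (-(1 * u))‖ := by
        have := hreal 1 zero_le_one
        rw [ofReal_one] at this
        rw [one_mul, hreal ε hε, this]
        gcongr

/-- Abel's method: the boundary values are reached through `r + ε`, where the integrand stays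
dominated. -/
theorem mellin_one_sub_cexp (hr : 0 ≤ r.re) (hw : -1 < w.re) (hw' : w.re < 0) :
    mellin (fun u : ℝ ↦ 1 - cexp (-(r * u))) w = r ^ (-w) * mellinOneSubExp w := by
  rcases eq_or_ne r 0 with rfl | hr0
  · have hw0 : -w ≠ 0 := by rintro h; simp [neg_eq_zero.1 h] at hw'
    simp [mellin, zero_cpow hw0]
  have hslit : r ∈ slitPlane := hr.lt_or_eq.imp id fun h him ↦ hr0 (Complex.ext h.symm him)
  have hlim : Tendsto (fun ε : ℝ ↦ r + ε) (𝓝[>] 0) (𝓝 r) := by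
    simpa using ((by fun_prop : Continuous fun ε : ℝ ↦ r + ε).tendsto 0).mono_left
      nhdsWithin_le_nhds
  have hleft : Tendsto (fun ε : ℝ ↦ mellin (fun u : ℝ ↦ 1 - cexp (-((r + ε) * u))) w) (𝓝[>] 0)
      (𝓝 (mellin (fun u : ℝ ↦ 1 - cexp (-(r * u))) w)) := by
    refine tendsto_integral_filter_of_dominated_convergence
      (fun u : ℝ ↦ ‖(u : ℂ) ^ (w - 1)‖ * (‖1 - cexp (-(r * u))‖ + ‖1 - cexp (-(1 * u))‖))
      ?_ ?_ ?_ ?_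
    · filter_upwards [self_mem_nhdsWithin] with ε (hε : 0 < ε)
      exact (mellinConvergent_one_sub_cexp (by simpa using add_nonneg hr hε.le) hw
        hw').aestronglyMeasurable
    · filter_upwards [Ioc_mem_nhdsGT one_pos] with ε hε
      refine (ae_restrict_iff' measurableSet_Ioi).2 (.of_forall fun u (hu : 0 < u) ↦ ?_)
      rw [norm_smul]
      gcongr
      exact norm_one_sub_cexp_add_mul_le hr hε.1.le hε.2 hu.le
    · simp_rw [mul_add, ← norm_smul]
      exact (mellinConvergent_one_sub_cexp hr hw hw').norm.add
        (mellinConvergent_one_sub_cexp (by simp) hw hw').norm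
    · refine .of_forall fun u ↦ ?_
      have hexp := (continuous_exp.tendsto _).comp (hlim.mul_const (u : ℂ)).neg
      exact (hexp.const_sub 1).const_smul _
  have hright : Tendsto (fun ε : ℝ ↦ (r + ε) ^ (-w) * mellinOneSubExp w) (𝓝[>] 0)
      (𝓝 (r ^ (-w) * mellinOneSubExp w)) :=
    (((continuousAt_cpow_const hslit).tendsto).comp hlim).mul_const _
  refine tendsto_nhds_unique (hleft.congr' ?_) hright
  filter_upwards [self_mem_nhdsWithin] with ε (hε : 0 < ε)
  exact mellin_one_sub_cexp_of_re_pos (by simpa using add_pos_of_nonneg_of_pos hr hε) hw hw'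

end Mellin

section Series

lemma integrable_of_hasSum {α ι E : Type*} [MeasurableSpace α] {μ : Measure α}
    [NormedAddCommGroup E] [Countable ι] {F : ι → α → E} {f : α → E}
    (hF : ∀ i, Integrable (F i) μ) (hsum : Summable fun i ↦ ∫ x, ‖F i x‖ ∂μ)
    (hf : ∀ᵐ x ∂μ, HasSum (F · x) (f x)) : Integrable f μ := by
  have hfin : ∑' i, ∫⁻ x, ‖F i x‖ₑ ∂μ < ⊤ := by
    simp_rw [← fun i ↦ ofReal_integral_norm_eq_lintegral_enorm (hF i)]
    rw [← ENNReal.ofReal_tsum_of_nonneg (fun i ↦ integral_nonneg fun _ ↦ norm_nonneg _) hsum]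
    exact ENNReal.ofReal_lt_top
  refine ⟨aestronglyMeasurable_of_tendsto_ae atTop
    (fun s ↦ Finset.aestronglyMeasurable_fun_sum s fun i _ ↦ (hF i).aestronglyMeasurable) hf,
    lt_of_le_of_lt ?_ hfin⟩
  rw [← lintegral_tsum fun i ↦ (hF i).aestronglyMeasurable.enorm]
  refine lintegral_mono_ae (hf.mono fun x hx ↦ ?_)
  rw [← hx.tsum_eq]
  exact enorm_tsum_le_tsum_enorm

lemma integral_norm_mellin_comp_mul_left (g : ℝ → ℂ) (w : ℂ) {p : ℝ} (hp : 0 < p) :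
    ∫ u in Ioi (0 : ℝ), ‖(u : ℂ) ^ (w - 1) • g (p * u)‖
      = p ^ (-w.re) * ∫ u in Ioi (0 : ℝ), ‖(u : ℂ) ^ (w - 1) • g u‖ := by
  have hscale : ∀ u ∈ Ioi (0 : ℝ), ‖(u : ℂ) ^ (w - 1) • g (p * u)‖
      = p ^ (1 - w.re) * ‖((p * u : ℝ) : ℂ) ^ (w - 1) • g (p * u)‖ := fun u hu ↦ by
    have hu : 0 < u := hu
    simp only [norm_smul, norm_cpow_eq_rpow_re_of_pos hu,
      norm_cpow_eq_rpow_re_of_pos (mul_pos hp hu), Real.mul_rpow hp.le hu.le, sub_re, one_re]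
    rw [← neg_sub w.re, Real.rpow_neg hp.le]
    field_simp
  rw [setIntegral_congr_fun measurableSet_Ioi hscale, integral_const_mul,
    integral_comp_mul_left_Ioi (fun u : ℝ ↦ ‖(u : ℂ) ^ (w - 1) • g u‖) 0 hp, mul_zero, smul_eq_mul,
    ← mul_assoc, ← Real.rpow_neg_one p, ← Real.rpow_add hp]
  ring_nf

theorem hasMellin_of_hasSum_comp_mul {ι : Type*} [Countable ι] {c : ι → ℂ} {p : ι → ℝ} {w : ℂ}
    {g F : ℝ → ℂ} (hp : ∀ i, c i = 0 ∨ 0 < p i) (hg : MellinConvergent g w)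
    (hsum : Summable fun i ↦ ‖c i‖ * p i ^ (-w.re))
    (hF : ∀ u > 0, HasSum (fun i ↦ c i * g (p i * u)) (F u)) :
    HasMellin F w ((∑' i, c i * (p i : ℂ) ^ (-w)) * mellin g w) := by
  have hterm (i : ι) :
      HasMellin (fun u ↦ c i • g (p i * u)) w (c i * (p i : ℂ) ^ (-w) * mellin g w) := by
    rcases hp i with hi | hi
    · simp [hi, HasMellin, MellinConvergent, mellin]
    · have := hasMellin_const_smul ((MellinConvergent.comp_mul_left hi).2 hg) (c i)
      rwa [mellin_comp_mul_left g w hi, smul_eq_mul, smul_eq_mul, ← mul_assoc] at this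
  have hnorm : Summable fun i ↦ ∫ u in Ioi (0 : ℝ), ‖(u : ℂ) ^ (w - 1) • c i • g (p i * u)‖ := by
    refine (hsum.mul_right (∫ u in Ioi (0 : ℝ), ‖(u : ℂ) ^ (w - 1) • g u‖)).congr fun i ↦ ?_
    simp_rw [smul_comm _ (c i), norm_smul (c i), integral_const_mul]
    rcases hp i with hi | hi
    · simp [hi]
    · rw [integral_norm_mellin_comp_mul_left g w hi, mul_assoc]
  have hF' : ∀ u ∈ Ioi (0 : ℝ),
      HasSum (fun i ↦ (u : ℂ) ^ (w - 1) • c i • g (p i * u)) ((u : ℂ) ^ (w - 1) • F u) :=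
    fun u hu ↦ (hF u hu).const_smul _
  refine ⟨integrable_of_hasSum (fun i ↦ (hterm i).1) hnorm
    ((ae_restrict_iff' measurableSet_Ioi).2 (.of_forall hF')), ?_⟩
  have hint := integral_tsum_of_summable_integral_norm (fun i ↦ (hterm i).1) hnorm
  rw [mellin, setIntegral_congr_fun measurableSet_Ioi fun u hu ↦ (hF' u hu).tsum_eq.symm,
    ← hint, ← tsum_mul_right]
  exact tsum_congr fun i ↦ (hterm i).2

end Series

section Zeta

open Real in
lemma mul_I_cpow {x : ℝ} (hx : 0 < x) (w : ℂ) :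
    (x * I) ^ w = (x : ℂ) ^ w * cexp (π * I * w / 2) := by
  rw [cpow_def_of_ne_zero (by simp [hx.ne']), cpow_def_of_ne_zero (by simp [hx.ne']),
    log_ofReal_mul hx I_ne_zero, ofReal_log hx.le, log_I, ← Complex.exp_add]
  ring_nf

open Real in
lemma mul_neg_I_cpow {x : ℝ} (hx : 0 < x) (w : ℂ) :
    (x * -I) ^ w = (x : ℂ) ^ w * cexp (-π * I * w / 2) := by
  rw [cpow_def_of_ne_zero (by simp [hx.ne']), cpow_def_of_ne_zero (by simp [hx.ne']),
    log_ofReal_mul hx (neg_ne_zero.2 I_ne_zero), ofReal_log hx.le, log_neg_I, ← Complex.exp_add]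
  ring_nf

variable {s w : ℂ}

lemma div_natCast_cpow_mul_cpow_neg (z : ℂ) (n : ℕ) (hs : s ≠ 0) (hsw : s + w ≠ 0) :
    z / (n : ℂ) ^ s * (n : ℂ) ^ (-w) = z / (n : ℂ) ^ (s + w) := by
  rcases eq_or_ne n 0 with rfl | hn
  · simp [zero_cpow hs, zero_cpow hsw]
  · have hn : (n : ℂ) ≠ 0 := Nat.cast_ne_zero.2 hn
    rw [cpow_add _ _ hn, cpow_neg]
    field_simp

open Real in
theorem hasMellin_expZeta_sub (a t : ℝ) (hw : -1 < w.re) (hw' : w.re < 0)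
    (hsw : 1 < (s + w).re) :
    HasMellin (fun u : ℝ ↦ expZeta a s - expZeta ((a - t * u : ℝ) : UnitAddCircle) s) w
      ((2 * π * I * t) ^ (-w) * mellinOneSubExp w * expZeta a (s + w)) := by
  have hs : 1 < s.re := by rw [add_re] at hsw; linarith
  have hs0 : s ≠ 0 := by rintro rfl; simp at hs; linarith
  have hsw0 : s + w ≠ 0 := by intro h; simp [h] at hsw; linarith
  set c : ℕ → ℂ := fun n ↦ cexp (2 * π * I * a * n) / (n : ℂ) ^ s with hc
  have hcw (n : ℕ) : c n * ((n : ℝ) : ℂ) ^ (-w) = cexp (2 * π * I * a * n) / (n : ℂ) ^ (s + w) := by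
    simpa using div_natCast_cpow_mul_cpow_neg _ n hs0 hsw0
  have hsumw := hasSum_expZeta_of_one_lt_re a hsw
  have hre : 0 ≤ (2 * π * I * t).re := by simp
  rw [← mellin_one_sub_cexp hre hw hw', mul_comm, ← hsumw.tsum_eq, ← tsum_congr hcw]
  refine hasMellin_of_hasSum_comp_mul (fun n ↦ ?_) (mellinConvergent_one_sub_cexp hre hw hw')
    (hsumw.summable.norm.congr fun n ↦ ?_) fun u _ ↦ ?_
  · rcases n.eq_zero_or_pos with rfl | hn
    · exact .inl (by simp [hc, zero_cpow hs0])
    · exact .inr (by exact_mod_cast hn)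
  · rw [← hcw, norm_mul, ofReal_natCast, norm_natCast_cpow_of_re_ne_zero _ (by simpa using hw'.ne),
      neg_re]
  · convert! (hasSum_expZeta_of_one_lt_re a hs).sub
      (hasSum_expZeta_of_one_lt_re (a - t * u) hs) using 2 with n
    rw [← sub_div, hc, div_mul_eq_mul_div, mul_sub, mul_one, ← Complex.exp_add]
    push_cast
    ring_nf

open Real in
lemma hurwitzZeta_one_sub_of_one_lt_re (x : UnitAddCircle) (hs : 1 < s.re) :
    hurwitzZeta x (1 - s) = (2 * π) ^ (-s) * Gamma s *
      (cexp (-π * I * s / 2) * expZeta x s + cexp (π * I * s / 2) * expZeta (-x) s) := by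
  refine hurwitzZeta_one_sub x (fun n hn ↦ ?_) (.inr fun h ↦ ?_)
  · rw [hn, neg_re, natCast_re] at hs
    linarith [n.cast_nonneg (α := ℝ)]
  · simp [h] at hs

open Real in
theorem hasMellin_hurwitzZeta_sub (a : ℝ) (hw : -1 < w.re) (hw' : w.re < 0)
    (hsw : 1 < (s + w).re) :
    HasMellin
      (fun u : ℝ ↦ hurwitzZeta a (1 - s) - hurwitzZeta ((a - u : ℝ) : UnitAddCircle) (1 - s)) w
      (Gamma s / Gamma (s + w) * mellinOneSubExp w * hurwitzZeta a (1 - (s + w))) := by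
  have hs : 1 < s.re := by rw [add_re] at hsw; linarith
  have hΓ : Gamma (s + w) ≠ 0 := Gamma_ne_zero_of_re_pos (by linarith)
  have hpos := hasMellin_expZeta_sub a 1 hw hw' hsw
  have hneg := hasMellin_expZeta_sub (-a) (-1) hw hw' hsw
  have hadd := hasMellin_add (hpos.1.const_smul (cexp (-π * I * s / 2)))
    (hneg.1.const_smul (cexp (π * I * s / 2)))
  have hI : (2 * π * I * (1 : ℝ)) ^ (-w) = (2 * π : ℂ) ^ (-w) * cexp (π * I * (-w) / 2) := by
    simpa using mul_I_cpow two_pi_pos (-w)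
  have hI' : (2 * π * I * (-1 : ℝ)) ^ (-w) = (2 * π : ℂ) ^ (-w) * cexp (-π * I * (-w) / 2) := by
    simpa using mul_neg_I_cpow two_pi_pos (-w)
  convert! hasMellin_const_smul hadd.1 ((2 * π) ^ (-s) * Gamma s) using 1
  · ext u
    rw [hurwitzZeta_one_sub_of_one_lt_re _ hs, hurwitzZeta_one_sub_of_one_lt_re _ hs, one_mul,
      show -a - -1 * u = -(a - u) by ring]
    simp only [AddCircle.coe_neg, smul_eq_mul]
    ring
  · have hexp : cexp (-π * I * (s + w) / 2) = cexp (-π * I * s / 2) * cexp (π * I * (-w) / 2) := by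
      rw [← Complex.exp_add]; ring_nf
    have hexp' : cexp (π * I * (s + w) / 2) = cexp (π * I * s / 2) * cexp (-π * I * (-w) / 2) := by
      rw [← Complex.exp_add]; ring_nf
    rw [hadd.2, mellin_const_smul, mellin_const_smul, hpos.2, hneg.2, hI, hI',
      hurwitzZeta_one_sub_of_one_lt_re _ hsw, hexp, hexp', neg_add,
      cpow_add _ _ (by simp [pi_ne_zero]), AddCircle.coe_neg, smul_eq_mul, smul_eq_mul, smul_eq_mul]
    field_simp

end Zeta

section Marchaud

lemma ofReal_cpow_sub_one_smul_ofReal (s : ℝ) {u : ℝ} (hu : 0 < u) (y : ℝ) :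
    (u : ℂ) ^ ((s : ℂ) - 1) • (y : ℂ) = ((u ^ (s - 1) * y : ℝ) : ℂ) := by
  rw [smul_eq_mul, ofReal_mul, ofReal_cpow hu.le, ofReal_sub, ofReal_one]

lemma mellinConvergent_ofReal_iff {f : ℝ → ℝ} {s : ℝ} :
    MellinConvergent (fun u ↦ (f u : ℂ)) s ↔ IntegrableOn (fun u ↦ u ^ (s - 1) * f u) (Ioi 0) := by
  have hcongr : EqOn (fun u : ℝ ↦ (u : ℂ) ^ ((s : ℂ) - 1) • (f u : ℂ))
      (fun u ↦ ((u ^ (s - 1) * f u : ℝ) : ℂ)) (Ioi 0) :=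
    fun u hu ↦ ofReal_cpow_sub_one_smul_ofReal s hu (f u)
  rw [MellinConvergent, integrableOn_congr_fun hcongr measurableSet_Ioi]
  exact ⟨fun h ↦ by simpa [IntegrableOn] using Integrable.re h, fun h ↦ h.ofReal⟩

lemma mellin_ofReal (f : ℝ → ℝ) (s : ℝ) :
    mellin (fun u ↦ (f u : ℂ)) s = ((∫ u in Ioi 0, u ^ (s - 1) * f u : ℝ) : ℂ) := by
  rw [mellin, setIntegral_congr_fun measurableSet_Ioi
    (fun u hu ↦ ofReal_cpow_sub_one_smul_ofReal s hu (f u)), integral_complex_ofReal]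

lemma exists_pos_mellinOneSubExp_eq {s : ℝ} (hs : -1 < s) (hs' : s < 0) :
    ∃ c > 0, mellinOneSubExp s = ((c : ℝ) : ℂ) := by
  have hofReal (u : ℝ) : 1 - cexp (-u) = ((1 - Real.exp (-u) : ℝ) : ℂ) := by push_cast; rfl
  have hconv : IntegrableOn (fun u : ℝ ↦ u ^ (s - 1) * (1 - Real.exp (-u))) (Ioi 0) := by
    rw [← mellinConvergent_ofReal_iff]
    simpa using mellinConvergent_one_sub_cexp (r := 1) (w := s) (by simp) hs hs'
  have hpos : ∀ u ∈ Ioi (0 : ℝ), 0 < u ^ (s - 1) * (1 - Real.exp (-u)) := fun u (hu : 0 < u) ↦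
    mul_pos (Real.rpow_pos_of_pos hu _) (by simpa using hu)
  refine ⟨∫ u in Ioi 0, u ^ (s - 1) * (1 - Real.exp (-u)), ?_, ?_⟩
  · have hsupp : Ioi 0 ⊆ Function.support fun u : ℝ ↦ u ^ (s - 1) * (1 - Real.exp (-u)) :=
      fun u hu ↦ (hpos u hu).ne'
    rw [gt_iff_lt, setIntegral_pos_iff_support_of_nonneg_ae
      ((ae_restrict_iff' measurableSet_Ioi).2 (.of_forall fun u hu ↦ (hpos u hu).le)) hconv,
      inter_eq_right.2 hsupp]
    simp
  · rw [← mellin_ofReal, mellinOneSubExp, funext hofReal]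

lemma bernoulliPoly_eq_bernoulliFun (n : ℕ) (x : ℝ) : bernoulliPoly n x = bernoulliFun n x := by
  simp [bernoulliPoly, bernoulliFun, Polynomial.aeval_def, Polynomial.eval_map]

lemma hurwitzZeta_neg_natCast {n : ℕ} (hn : n ≠ 0) {x : ℝ} (hx : x ∈ Icc 0 1) :
    hurwitzZeta x (-n) = ((-(bernoulliFun (n + 1) x / (n + 1)) : ℝ) : ℂ) := by
  have hmap : (Polynomial.bernoulli (n + 1)).map (algebraMap ℚ ℂ)
      = ((Polynomial.bernoulli (n + 1)).map (algebraMap ℚ ℝ)).map ofRealHom := by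
    rw [Polynomial.map_map]
    congr 1
  rw [hurwitzZeta_neg_nat hn hx, bernoulliFun, hmap, ← ofRealHom_eq_coe, eval_map_apply]
  simp
  ring

lemma periodizedBernoulli_coe {n : ℕ} (hn : n ≠ 1) {x : ℝ} (hx : x ∈ Icc 0 1) :
    periodizedBernoulli n x = bernoulliFun n x := by
  rcases hx.2.lt_or_eq with h | rfl
  · exact AddCircle.liftIco_coe_apply (by simpa using ⟨hx.1, h⟩)
  · rw [bernoulliFun_endpoints_eq_of_ne_one hn, AddCircle.coe_period, ← AddCircle.coe_zero]
    exact AddCircle.liftIco_coe_apply (by simp)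

lemma exists_mem_Icc_coe_eq (x : UnitAddCircle) :
    ∃ y ∈ Icc (0 : ℝ) 1, (y : UnitAddCircle) = x := by
  simpa using (AddCircle.coe_image_Icc_eq (p := (1 : ℝ)) 0).ge (mem_univ x)

lemma hurwitzZeta_neg_natCast_eq_periodizedBernoulli {n : ℕ} (hn : n ≠ 0) (x : UnitAddCircle) :
    hurwitzZeta x (-n) = ((-(periodizedBernoulli (n + 1) x / (n + 1)) : ℝ) : ℂ) := by
  obtain ⟨y, hy, rfl⟩ := exists_mem_Icc_coe_eq x
  rw [hurwitzZeta_neg_natCast hn hy, periodizedBernoulli_coe (by simpa using hn) hy]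

lemma hasMellin_periodizedBernoulli_sub {n : ℕ} (hn : n ≠ 0) {w : ℂ} (hw : -1 < w.re)
    (hw' : w.re < 0) (a : ℝ) :
    HasMellin
      (fun u : ℝ ↦ ((periodizedBernoulli (n + 1) a -
        periodizedBernoulli (n + 1) ((a - u : ℝ) : UnitAddCircle) : ℝ) : ℂ)) w
      (-((n + 1) * Gamma (n + 1) / Gamma (n + 1 + w) * mellinOneSubExp w *
        hurwitzZeta a (-n - w))) := by
  have hn' : (1 : ℝ) ≤ n := by exact_mod_cast Nat.one_le_iff_ne_zero.2 hn
  have hre : ((n : ℂ) + 1 + w).re = n + 1 + w.re := by simp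
  have hmellin := hasMellin_hurwitzZeta_sub (s := n + 1) a hw hw' (by rw [hre]; linarith)
  have hscaled := hasMellin_const_smul hmellin.1 (-((n : ℂ) + 1))
  rw [hmellin.2] at hscaled
  convert! hscaled using 1
  · ext u
    rw [show 1 - ((n : ℂ) + 1) = -n by ring, hurwitzZeta_neg_natCast_eq_periodizedBernoulli hn,
      hurwitzZeta_neg_natCast_eq_periodizedBernoulli hn, smul_eq_mul]
    push_cast
    field
  · rw [smul_eq_mul, show 1 - ((n : ℂ) + 1 + w) = -n - w by ring]
    ring

/-- The integral of Marchaud's fractional derivative of order `α` of `f` at `x`, without the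
normalizing factor `α / Γ (1 - α)`. -/
noncomputable def marchaudIntegral (α : ℝ) (f : ℝ → ℝ) (x : ℝ) : ℝ :=
  ∫ u in Ioi 0, u ^ (-α - 1) * (f x - f (x - u))

/-- The integrand of `marchaudIntegral α f x` is integrable, so that the integral
is not a junk value. -/
def MarchaudIntegrable (α : ℝ) (f : ℝ → ℝ) (x : ℝ) : Prop :=
  IntegrableOn (fun u ↦ u ^ (-α - 1) * (f x - f (x - u))) (Ioi 0)

theorem marchaudIntegrable_periodizedBernoulli {n : ℕ} (hn : n ≠ 0) {α : ℝ} (hα : α ∈ Ioo 0 1)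
    (a : ℝ) : MarchaudIntegrable α (fun x ↦ periodizedBernoulli (n + 1) x) a :=
  mellinConvergent_ofReal_iff.1
    (hasMellin_periodizedBernoulli_sub hn (neg_lt_neg hα.2) (neg_lt_zero.2 hα.1) a).1

theorem exists_pos_hurwitzZeta_eq_marchaudIntegral {n : ℕ} (hn : n ≠ 0) {α : ℝ} (hα : α ∈ Ioo 0 1)
    (a : ℝ) : ∃ C > 0, hurwitzZeta a (-n + α)
      = ((-(C * marchaudIntegral α (fun x ↦ periodizedBernoulli (n + 1) x) a) : ℝ) : ℂ) := by
  have hn' : (1 : ℝ) ≤ n := by exact_mod_cast Nat.one_le_iff_ne_zero.2 hn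
  obtain ⟨c, hc, hcM⟩ := exists_pos_mellinOneSubExp_eq (neg_lt_neg hα.2) (neg_lt_zero.2 hα.1)
  have hΓ : 0 < Real.Gamma (n + 1 + -α) := Real.Gamma_pos_of_pos (by linarith [hα.2])
  set D : ℝ := (n + 1) * Real.Gamma (n + 1) / Real.Gamma (n + 1 + -α) * c
  have hD : 0 < D := by positivity
  have hDcast : (n + 1) * Gamma (n + 1) / Gamma (n + 1 + (-α : ℝ)) * mellinOneSubExp (-α : ℝ)
      = (D : ℂ) := by
    simp only [D, ofReal_mul, ofReal_div, ← Gamma_ofReal, hcM]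
    push_cast
    rfl
  have hmellin : ((marchaudIntegral α (fun x ↦ periodizedBernoulli (n + 1) x) a : ℝ) : ℂ)
      = -(D * hurwitzZeta a (-n + α)) := by
    rw [marchaudIntegral, ← mellin_ofReal, (hasMellin_periodizedBernoulli_sub hn
      (neg_lt_neg hα.2) (neg_lt_zero.2 hα.1) a).2, hDcast]
    push_cast
    rw [sub_neg_eq_add]
  refine ⟨D⁻¹, inv_pos.2 hD, ?_⟩
  rw [ofReal_neg, ofReal_mul, hmellin, ofReal_inv]
  field_simp [ofReal_ne_zero.2 hD.ne']

end Marchaud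

section Periodic

/-- Comparing `w` with its value at the sign change `m` of `d` bounds the weighted integral below by
the unweighted one. -/
lemma intervalIntegral_mul_pos_of_strictAntiOn {w d : ℝ → ℝ} {p m q : ℝ} (hpm : p < m) (hmq : m ≤ q)
    (hw : StrictAntiOn w (Ioc p q)) (hwm : 0 ≤ w m) (hpos : ∀ u ∈ Ioo p m, 0 < d u)
    (hneg : ∀ u ∈ Ioo m q, d u ≤ 0) (hint : 0 ≤ ∫ u in p..q, d u)
    (hd : IntervalIntegrable d volume p q)
    (hwd : IntervalIntegrable (fun u ↦ w u * d u) volume p q) :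
    0 < ∫ u in p..q, w u * d u := by
  have hmem : m ∈ Ioc p q := ⟨hpm, hmq⟩
  have hm : m ∈ uIcc p q := mem_uIcc_of_le hpm.le hmq
  have hdiff : IntervalIntegrable (fun u ↦ (w u - w m) * d u) volume p q := by
    simpa only [sub_mul] using hwd.sub (hd.const_mul (w m))
  have hleft : 0 < ∫ u in p..m, (w u - w m) * d u :=
    intervalIntegral.intervalIntegral_pos_of_pos_on (hdiff.mono_set (uIcc_subset_uIcc_left hm))
      (fun u hu ↦ mul_pos (sub_pos.2 (hw ⟨hu.1, hu.2.le.trans hmq⟩ hmem hu.2)) (hpos u hu)) hpm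
  have hright : 0 ≤ ∫ u in m..q, (w u - w m) * d u := by
    simpa using intervalIntegral.integral_mono_on_of_le_Ioo hmq (intervalIntegrable_const (c := 0))
      (hdiff.mono_set (uIcc_subset_uIcc_right hm)) fun u hu ↦ mul_nonneg_of_nonpos_of_nonpos
        (sub_nonpos.2 (hw.antitoneOn hmem ⟨hpm.trans hu.1, hu.2.le⟩ hu.1.le)) (hneg u hu)
  calc 0 < (∫ u in p..m, (w u - w m) * d u) + ∫ u in m..q, (w u - w m) * d u :=
        add_pos_of_pos_of_nonneg hleft hright
    _ = ∫ u in p..q, (w u - w m) * d u := intervalIntegral.integral_add_adjacent_intervals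
        (hdiff.mono_set (uIcc_subset_uIcc_left hm)) (hdiff.mono_set (uIcc_subset_uIcc_right hm))
    _ ≤ (∫ u in p..q, (w u - w m) * d u) + w m * ∫ u in p..q, d u :=
        le_add_of_nonneg_right (mul_nonneg hwm hint)
    _ = ∫ u in p..q, w u * d u := by
        rw [← intervalIntegral.integral_const_mul,
          ← intervalIntegral.integral_add hdiff (hd.const_mul _)]
        ring_nf

theorem setIntegral_Ioi_mul_pos_of_periodic {w d : ℝ → ℝ} {T c : ℝ} (hw : StrictAntiOn w (Ioi 0))
    (hw0 : ∀ u > 0, 0 ≤ w u) (hd : Continuous d) (hper : Function.Periodic d T) (hc : c ∈ Ioc 0 T)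
    (hpos : ∀ u ∈ Ioo 0 c, 0 < d u) (hneg : ∀ u ∈ Ioo c T, d u ≤ 0) (hint : 0 ≤ ∫ u in 0..T, d u)
    (hwd : IntegrableOn (fun u ↦ w u * d u) (Ioi 0)) : 0 < ∫ u in Ioi 0, w u * d u := by
  have hT : 0 < T := hc.1.trans_le hc.2
  have hii (k : ℕ) : IntervalIntegrable (fun u ↦ w u * d u) volume (k * T) ((k + 1 : ℕ) * T) :=
    (intervalIntegrable_iff_integrableOn_Ioc_of_le (by gcongr; simp)).2
      (hwd.mono_set fun u hu ↦ (by positivity : 0 ≤ k * T).trans_lt hu.1)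
  have hshift (k : ℕ) (u : ℝ) : d (u - k * T) = d u := by
    simpa using hper.sub_nat_mul_eq k (x := u)
  have hperiod (k : ℕ) : 0 < ∫ u in k * T..(k + 1 : ℕ) * T, w u * d u := by
    have hkT : 0 ≤ k * T := by positivity
    have hsucc : ((k + 1 : ℕ) : ℝ) * T = k * T + T := by push_cast; ring
    refine intervalIntegral_mul_pos_of_strictAntiOn (m := k * T + c) (by linarith [hc.1])
      (by linarith [hc.2]) (hw.mono fun u hu ↦ hkT.trans_lt hu.1) (hw0 _ (by linarith [hc.1]))
      (fun u hu ↦ ?_) (fun u hu ↦ ?_) ?_ (hd.intervalIntegrable _ _) (hii k)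
    · rw [← hshift k]
      exact hpos _ ⟨by linarith [hu.1], by linarith [hu.2]⟩
    · rw [← hshift k]
      exact hneg _ ⟨by linarith [hu.1], by linarith [hu.2]⟩
    · rwa [hsucc, hper.intervalIntegral_add_eq (k * T) 0, zero_add]
  have hlim : Tendsto (fun n : ℕ ↦ ∑ k ∈ Finset.range n, ∫ u in k * T..(k + 1 : ℕ) * T, w u * d u)
      atTop (𝓝 (∫ u in Ioi 0, w u * d u)) := by
    have := intervalIntegral_tendsto_integral_Ioi 0 hwd
      (tendsto_natCast_atTop_atTop.atTop_mul_const hT)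
    refine this.congr fun n ↦ ?_
    simpa using (intervalIntegral.sum_integral_adjacent_intervals fun k _ ↦ hii k).symm
  refine (hperiod 0).trans_le (ge_of_tendsto hlim ?_)
  filter_upwards [eventually_ge_atTop 1] with n hn
  exact Finset.single_le_sum (fun k _ ↦ (hperiod k).le) (Finset.mem_range.2 hn)

end Periodic

/-- An odd continuous function of period `1` which, like the sine, rises on `[0, b]` from `0` to a
crest at `b` and falls on `[b, 1/2]`. -/
structure IsSineLike (f : ℝ → ℝ) (b : ℝ) : Prop where
  continuous : Continuous f
  periodic : Function.Periodic f 1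
  odd : Function.Odd f
  crest_mem : b ∈ Icc 0 (1 / 2)
  strictMonoOn : StrictMonoOn f (Icc 0 b)
  strictAntiOn : StrictAntiOn f (Icc b (1 / 2))

namespace IsSineLike

variable {f : ℝ → ℝ} {a b : ℝ}

lemma map_zero (hf : IsSineLike f b) : f 0 = 0 := hf.odd.map_zero

lemma map_half (hf : IsSineLike f b) : f (1 / 2) = 0 := by
  have h := hf.odd (1 / 2)
  rw [← hf.periodic, show -(1 / 2 : ℝ) + 1 = 1 / 2 by norm_num] at h
  linarith

lemma nonneg (hf : IsSineLike f b) {x : ℝ} (hx : x ∈ Icc 0 b) : 0 ≤ f x :=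
  hf.map_zero ▸ hf.strictMonoOn.monotoneOn ⟨le_rfl, hf.crest_mem.1⟩ hx hx.1

lemma pos (hf : IsSineLike f b) {x : ℝ} (hx : x ∈ Ioo 0 (1 / 2)) : 0 < f x := by
  rcases le_total x b with hxb | hxb
  · rw [← hf.map_zero]
    exact hf.strictMonoOn ⟨le_rfl, hf.crest_mem.1⟩ ⟨hx.1.le, hxb⟩ hx.1
  · rw [← hf.map_half]
    exact hf.strictAntiOn ⟨hxb, hx.2.le⟩ ⟨hf.crest_mem.2, le_rfl⟩ hx.2

lemma comp_half_sub (hf : IsSineLike f b) : IsSineLike (fun x ↦ f (1 / 2 - x)) (1 / 2 - b) where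
  continuous := hf.continuous.comp (by fun_prop)
  periodic x := by
    beta_reduce
    rw [← hf.periodic (1 / 2 - (x + 1))]
    ring_nf
  odd x := by
    rw [← hf.odd, ← hf.periodic (-(1 / 2 - x))]
    ring_nf
  crest_mem := by constructor <;> linarith [hf.crest_mem.1, hf.crest_mem.2]
  strictMonoOn x hx y hy hxy := hf.strictAntiOn ⟨by linarith [hy.2], by linarith [hy.1]⟩
    ⟨by linarith [hx.2], by linarith [hx.1]⟩ (by linarith)
  strictAntiOn x hx y hy hxy := hf.strictMonoOn ⟨by linarith [hy.2], by linarith [hy.1]⟩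
    ⟨by linarith [hx.2], by linarith [hx.1]⟩ (by linarith)

lemma integral_comp_sub_left (hf : IsSineLike f b) (a : ℝ) : ∫ u in 0..1, f (a - u) = 0 := by
  have hperiod (x : ℝ) : ∫ u in (x - 1)..x, f u = ∫ u in 0..1, f u := by
    simpa using hf.periodic.intervalIntegral_add_eq (x - 1) 0
  have hrefl : ∫ u in 0..1, f u = -∫ u in 0..1, f u := by
    rw [← intervalIntegral.integral_neg, ← intervalIntegral.integral_congr fun u _ ↦ hf.odd u,
      intervalIntegral.integral_comp_neg, ← hperiod 0]
    simp
  rw [intervalIntegral.integral_comp_sub_left, sub_zero, hperiod]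
  linarith

/-- The value `f a` is taken again at a point `y` of the falling side, and `f` exceeds
it exactly between `a` and `y` modulo `1`; the sign change is at `c = 1 + a - y`. -/
lemma exists_sign_change (hf : IsSineLike f b) (ha : a ∈ Icc 0 b) :
    ∃ c ∈ Ioc 0 1, (∀ u ∈ Ioo 0 c, f (a - u) < f a) ∧ ∀ u ∈ Ioo c 1, f a ≤ f (a - u) := by
  have hb := hf.crest_mem
  obtain ⟨y, hy, hya⟩ : ∃ y ∈ Icc b (1 / 2), f y = f a :=
    intermediate_value_Icc' hb.2 hf.continuous.continuousOn
      ⟨hf.map_half ▸ hf.nonneg ha, hf.strictMonoOn.monotoneOn ha ⟨hb.1, le_rfl⟩ ha.2⟩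
  refine ⟨1 + a - y, ⟨by linarith [ha.1, hy.2], by linarith [ha.2, hy.1]⟩, fun u hu ↦ ?_,
    fun u hu ↦ ?_⟩
  · rcases le_or_gt (a - u) (-(1 / 2)) with h | h
    · rw [← hya, ← hf.periodic]
      exact hf.strictAntiOn hy ⟨by linarith [hy.1, hu.2], by linarith⟩ (by linarith [hu.2])
    rcases lt_or_ge (a - u) 0 with h' | h'
    · have := hf.pos (x := -(a - u)) ⟨by linarith, by linarith⟩
      rw [hf.odd] at this
      linarith [hf.nonneg ha]
    · exact hf.strictMonoOn ⟨h', by linarith [hu.1, ha.2]⟩ ha (by linarith [hu.1])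
  · rw [← hf.periodic (a - u)]
    rcases le_total (a - u + 1) b with h | h
    · exact hf.strictMonoOn.monotoneOn ha ⟨by linarith [hu.2, ha.1], h⟩ (by linarith [hu.2])
    · rw [← hya]
      exact hf.strictAntiOn.antitoneOn ⟨h, by linarith [hu.1, hy.2]⟩ hy (by linarith [hu.1])

theorem marchaudIntegral_pos (hf : IsSineLike f b) (ha : a ∈ Icc 0 b) {α : ℝ} (hα : -1 < α)
    (hint : MarchaudIntegrable α f a) : 0 < marchaudIntegral α f a := by
  obtain ⟨c, hc, hlt, hle⟩ := hf.exists_sign_change ha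
  have hcont : Continuous fun u ↦ f (a - u) := hf.continuous.comp (by fun_prop)
  refine setIntegral_Ioi_mul_pos_of_periodic
    (Real.strictAntiOn_rpow_Ioi_of_exponent_neg (by linarith))
    (fun u hu ↦ Real.rpow_nonneg (le_of_lt hu) _) (continuous_const.sub hcont) (fun u ↦ ?_) hc
    (fun u hu ↦ sub_pos.2 (hlt u hu)) (fun u hu ↦ sub_nonpos.2 (hle u hu)) ?_ hint
  · rw [← hf.periodic (a - (u + 1))]
    ring_nf
  · rw [intervalIntegral.integral_sub (by simp) (hcont.intervalIntegrable _ _),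
      hf.integral_comp_sub_left]
    simpa using hf.nonneg ha

theorem marchaudIntegral_neg (hf : IsSineLike f b) (ha : a ∈ Icc (1 / 2) (1 - b)) {α : ℝ}
    (hα : -1 < α) (hint : MarchaudIntegrable α f a) : marchaudIntegral α f a < 0 := by
  have hrefl (x : ℝ) : f (1 / 2 - (x - 1 / 2)) = -f x := by
    rw [← hf.odd, ← hf.periodic (-x)]
    ring_nf
  have hintegrand (u : ℝ) : u ^ (-α - 1) * (f (1 / 2 - (a - 1 / 2)) - f (1 / 2 - (a - 1 / 2 - u)))
      = -(u ^ (-α - 1) * (f a - f (a - u))) := by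
    rw [hrefl, show a - 1 / 2 - u = a - u - 1 / 2 by ring, hrefl]
    ring
  have hint' : MarchaudIntegrable α (fun x ↦ f (1 / 2 - x)) (a - 1 / 2) := by
    simp only [MarchaudIntegrable, hintegrand]
    exact IntegrableOn.neg hint
  have hpos := hf.comp_half_sub.marchaudIntegral_pos (a := a - 1 / 2)
    ⟨by linarith [ha.1], by linarith [ha.2]⟩ hα hint'
  simp only [marchaudIntegral, hintegrand, integral_neg] at hpos
  exact neg_pos.1 hpos

end IsSineLike

section Bernoulli

variable {a b : ℝ}

lemma hasDerivAt_const_mul_bernoulliFun_succ (c : ℝ) (n : ℕ) (x : ℝ) :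
    HasDerivAt (fun x ↦ c * bernoulliFun (n + 1) x) ((n + 1) * (c * bernoulliFun n x)) x := by
  refine ((hasDerivAt_bernoulliFun (n + 1) x).const_mul c).congr_deriv ?_
  rw [Nat.add_sub_cancel, Nat.cast_succ, mul_left_comm]

lemma strictAntiOn_bernoulliFun_even_of_pos {k : ℕ}
    (hpos : ∀ x ∈ Ioo 0 (1 / 2), 0 < (-1) ^ (k + 1) * bernoulliFun (2 * k + 1) x) :
    StrictAntiOn (fun x ↦ (-1) ^ k * bernoulliFun (2 * k + 2) x) (Icc 0 (1 / 2)) := by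
  refine strictAntiOn_of_deriv_neg (convex_Icc _ _)
    ((continuous_bernoulliFun _).const_mul _).continuousOn fun x hx ↦ ?_
  rw [interior_Icc] at hx
  have := hpos x hx
  rw [pow_succ] at this
  rw [(hasDerivAt_const_mul_bernoulliFun_succ _ _ x).deriv]
  exact mul_neg_of_pos_of_neg (by positivity) (by linarith)

/-- On `[0, 1/2]` an odd-index Bernoulli polynomial vanishes at both endpoints, and its second
derivative is a positive multiple of the previous odd-index one. -/
theorem neg_one_pow_mul_bernoulliFun_odd_pos (k : ℕ) :
    ∀ x ∈ Ioo 0 (1 / 2), 0 < (-1) ^ (k + 1) * bernoulliFun (2 * k + 1) x := by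
  induction k with
  | zero => intro x hx; simpa using hx.2
  | succ k ih =>
    intro x hx
    have hderiv : deriv (fun x ↦ (-1) ^ k * bernoulliFun (2 * k + 2 + 1) x)
        = fun x ↦ ((2 * k + 2 : ℕ) + 1) * ((-1) ^ k * bernoulliFun (2 * k + 2) x) :=
      funext fun x ↦ (hasDerivAt_const_mul_bernoulliFun_succ _ _ x).deriv
    have hconcave : StrictConcaveOn ℝ (Icc 0 (1 / 2))
        fun x ↦ (-1) ^ k * bernoulliFun (2 * k + 2 + 1) x := by
      refine StrictAntiOn.strictConcaveOn_of_deriv (convex_Icc _ _)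
        ((continuous_bernoulliFun _).const_mul _).continuousOn ?_
      rw [hderiv, interior_Icc]
      exact fun x hx y hy hxy ↦ mul_lt_mul_of_pos_left (strictAntiOn_bernoulliFun_even_of_pos ih
        (Ioo_subset_Icc_self hx) (Ioo_subset_Icc_self hy) hxy) (by positivity)
    have hzero : bernoulliFun (2 * k + 2 + 1) 0 = 0 := by
      rw [bernoulliFun_eval_zero, bernoulli_eq_zero_of_odd ⟨k + 1, by ring⟩ (by lia), Rat.cast_zero]
    have hhalf : bernoulliFun (2 * k + 2 + 1) (1 / 2) = 0 := by
      rw [one_div]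
      exact bernoulliFun_eval_half_eq_zero (k + 1)
    have := hconcave.lt_on_openSegment (by norm_num) (by norm_num) (by norm_num)
      (openSegment_eq_Ioo (𝕜 := ℝ) one_half_pos ▸ hx)
    simp only [hzero, hhalf, mul_zero, min_self] at this
    simpa only [pow_succ, mul_neg_one, neg_neg, mul_add_one] using this

theorem strictAntiOn_neg_one_pow_mul_bernoulliFun_even (k : ℕ) :
    StrictAntiOn (fun x ↦ (-1) ^ k * bernoulliFun (2 * k + 2) x) (Icc 0 (1 / 2)) :=
  strictAntiOn_bernoulliFun_even_of_pos (neg_one_pow_mul_bernoulliFun_odd_pos k)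

theorem add_eq_one_of_bernoulliFun_even_eq_zero {k : ℕ} (ha : a ∈ Icc 0 (1 / 2))
    (hb : b ∈ Icc (1 / 2) 1) (ha0 : bernoulliFun (2 * k + 2) a = 0)
    (hb0 : bernoulliFun (2 * k + 2) b = 0) : a + b = 1 := by
  have hrefl : bernoulliFun (2 * k + 2) (1 - b) = 0 := by
    rw [bernoulliFun_eval_one_sub, hb0, mul_zero]
  have hmem : 1 - b ∈ Icc 0 (1 / 2) := ⟨by linarith [hb.2], by linarith [hb.1]⟩
  have := (strictAntiOn_neg_one_pow_mul_bernoulliFun_even k).injOn ha hmem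
    (by simp only [ha0, hrefl])
  linarith

theorem bernoulliFun_mul_bernoulliFun_succ_neg {k : ℕ} (hb : b ∈ Icc 0 (1 / 2))
    (hb0 : bernoulliFun (2 * k + 2) b = 0) (ha : a ∈ Ioo b (1 / 2) ∪ Ioo (1 - b) 1) :
    bernoulliFun (2 * k + 2) a * bernoulliFun (2 * k + 3) a < 0 := by
  have hanti := strictAntiOn_neg_one_pow_mul_bernoulliFun_even k
  have hodd (x : ℝ) (hx : x ∈ Ioo 0 (1 / 2)) : 0 < (-1) ^ k * bernoulliFun (2 * k + 3) x := by
    simpa [pow_succ, mul_add] using neg_one_pow_mul_bernoulliFun_odd_pos (k + 1) x hx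
  have hprod (x : ℝ) :
      (-1) ^ k * bernoulliFun (2 * k + 2) x * ((-1) ^ k * bernoulliFun (2 * k + 3) x) =
        bernoulliFun (2 * k + 2) x * bernoulliFun (2 * k + 3) x := by
    rw [mul_mul_mul_comm, ← mul_pow, neg_one_mul, neg_neg, one_pow, one_mul]
  rcases ha with ha | ha
  · have heven := hanti hb ⟨hb.1.trans ha.1.le, ha.2.le⟩ ha.1
    simp only [hb0, mul_zero] at heven
    rw [← hprod]
    exact mul_neg_of_neg_of_pos heven (hodd a ⟨hb.1.trans_lt ha.1, ha.2⟩)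
  · have heven := hanti ⟨by linarith [ha.2], by linarith [ha.1, hb.2]⟩ hb
      (by linarith [ha.1] : 1 - a < b)
    simp only [hb0, mul_zero] at heven
    have := mul_pos heven (hodd (1 - a) ⟨by linarith [ha.2], by linarith [ha.1, hb.2]⟩)
    rw [hprod, bernoulliFun_eval_one_sub, bernoulliFun_eval_one_sub,
      Even.neg_one_pow ⟨k + 1, by ring⟩, Odd.neg_one_pow ⟨k + 1, by ring⟩] at this
    linarith

lemma periodizedBernoulli_neg {n : ℕ} (hn : n ≠ 1) (x : UnitAddCircle) :
    periodizedBernoulli n (-x) = (-1) ^ n * periodizedBernoulli n x := by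
  obtain ⟨y, hy, rfl⟩ := exists_mem_Icc_coe_eq x
  have hy' : 1 - y ∈ Icc 0 1 := ⟨by linarith [hy.2], by linarith [hy.1]⟩
  have hneg : -(y : UnitAddCircle) = (1 - y : ℝ) := by
    rw [AddCircle.coe_sub, AddCircle.coe_period, zero_sub]
  rw [hneg, periodizedBernoulli_coe hn hy', periodizedBernoulli_coe hn hy,
    bernoulliFun_eval_one_sub]

theorem isSineLike_periodizedBernoulli {k : ℕ} (hb : b ∈ Icc 0 (1 / 2))
    (hb0 : bernoulliFun (2 * k + 2) b = 0) :
    IsSineLike (fun x ↦ (-1) ^ k * periodizedBernoulli (2 * k + 3) x) b := by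
  have hn : 2 * k + 3 ≠ 1 := by lia
  have hanti := strictAntiOn_neg_one_pow_mul_bernoulliFun_even k
  have hcont : Continuous fun x ↦ (-1) ^ k * bernoulliFun (2 * k + 2 + 1) x :=
    (continuous_bernoulliFun _).const_mul _
  have heq : EqOn (fun x ↦ (-1) ^ k * bernoulliFun (2 * k + 2 + 1) x)
      (fun x ↦ (-1) ^ k * periodizedBernoulli (2 * k + 3) x) (Icc 0 1) := fun x hx ↦ by
    simp only [periodizedBernoulli_coe hn hx]
  refine ⟨((periodizedBernoulli.continuous hn).comp (AddCircle.continuous_mk' 1)).const_mul _,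
    fun x ↦ by simp, fun x ↦ ?_, hb, ?_, ?_⟩
  · rw [AddCircle.coe_neg, periodizedBernoulli_neg hn,
      Odd.neg_one_pow (n := 2 * k + 3) ⟨k + 1, by ring⟩, neg_one_mul, mul_neg]
  · refine (strictMonoOn_of_deriv_pos (convex_Icc _ _) hcont.continuousOn fun x hx ↦ ?_).congr
      (heq.mono (Icc_subset_Icc_right (by linarith [hb.2])))
    rw [interior_Icc] at hx
    have := hanti ⟨hx.1.le, hx.2.le.trans hb.2⟩ hb hx.2
    simp only [hb0, mul_zero] at this
    rw [(hasDerivAt_const_mul_bernoulliFun_succ _ _ x).deriv]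
    positivity
  · refine (strictAntiOn_of_deriv_neg (convex_Icc _ _) hcont.continuousOn fun x hx ↦ ?_).congr
      (heq.mono (Icc_subset_Icc hb.1 (by norm_num)))
    rw [interior_Icc] at hx
    have := hanti hb ⟨hb.1.trans hx.1.le, hx.2.le⟩ hx.1
    simp only [hb0, mul_zero] at this
    rw [(hasDerivAt_const_mul_bernoulliFun_succ _ _ x).deriv]
    exact mul_neg_of_pos_of_neg (by positivity) this

end Bernoulli

section Zeros

variable {a b σ : ℝ}

lemma const_mul_marchaudIntegral (c α : ℝ) (f : ℝ → ℝ) (x : ℝ) :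
    marchaudIntegral α (fun y ↦ c * f y) x = c * marchaudIntegral α f x := by
  rw [marchaudIntegral, marchaudIntegral, ← integral_const_mul]
  congr! 2
  ring

lemma MarchaudIntegrable.const_mul {α x : ℝ} {f : ℝ → ℝ} (hf : MarchaudIntegrable α f x) (c : ℝ) :
    MarchaudIntegrable α (fun y ↦ c * f y) x := by
  refine (Integrable.const_mul hf c).congr (.of_forall fun _ ↦ ?_)
  ring

theorem hurwitzZeta_ne_zero {k : ℕ} (hb : b ∈ Icc 0 (1 / 2)) (hb0 : bernoulliFun (2 * k + 2) b = 0)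
    (hσ : σ ∈ Ioo (-(2 * k + 1 : ℕ) - 1 : ℝ) (-(2 * k + 1 : ℕ)))
    (ha : a ∈ Icc 0 b ∪ Icc (1 / 2) (1 - b)) : hurwitzZeta a σ ≠ 0 := by
  have hα : σ + (2 * k + 2 : ℕ) ∈ Ioo (0 : ℝ) 1 := by
    push_cast at hσ ⊢
    constructor <;> linarith [hσ.1, hσ.2]
  have hn : 2 * k + 2 ≠ 0 := by lia
  have hsine := isSineLike_periodizedBernoulli hb hb0
  have hint := (marchaudIntegrable_periodizedBernoulli hn hα a).const_mul ((-1) ^ k)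
  have hne : marchaudIntegral (σ + (2 * k + 2 : ℕ))
      (fun x ↦ (-1) ^ k * periodizedBernoulli (2 * k + 2 + 1) x) a ≠ 0 := by
    rcases ha with ha | ha
    · exact (hsine.marchaudIntegral_pos ha (by linarith [hα.1]) hint).ne'
    · exact (hsine.marchaudIntegral_neg ha (by linarith [hα.1]) hint).ne
  obtain ⟨C, hC, hζ⟩ := exists_pos_hurwitzZeta_eq_marchaudIntegral hn hα a
  rw [const_mul_marchaudIntegral] at hne
  have hσα : (σ : ℂ) = -(2 * k + 2 : ℕ) + (σ + (2 * k + 2 : ℕ) : ℝ) := by push_cast; ring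
  rw [hσα, hζ, ofReal_ne_zero]
  exact neg_ne_zero.2 (mul_ne_zero hC.ne' (right_ne_zero_of_mul hne))

lemma hurwitzZeta_im_eq_zero {n : ℕ} (hσ : σ ∈ Ioo (-n - 1 : ℝ) (-n)) (a : ℝ) :
    (hurwitzZeta a σ).im = 0 := by
  obtain ⟨C, -, hζ⟩ := exists_pos_hurwitzZeta_eq_marchaudIntegral n.succ_ne_zero
    (α := σ + (n + 1)) ⟨by linarith [hσ.1], by linarith [hσ.2]⟩ a
  have hσα : (σ : ℂ) = -(n + 1 : ℕ) + (σ + (n + 1) : ℝ) := by push_cast; ring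
  rw [hσα, hζ, ofReal_im]

/-- The values at the endpoints `-n - 1` and `-n` have opposite signs. -/
theorem exists_hurwitzZeta_eq_zero {n : ℕ} (hn : n ≠ 0) (ha : a ∈ Icc 0 1)
    (hneg : bernoulliFun (n + 1) a * bernoulliFun (n + 2) a < 0) :
    ∃ σ ∈ Ioo (-n - 1 : ℝ) (-n), hurwitzZeta a σ = 0 := by
  have hright : (hurwitzZeta a (-n : ℝ)).re = -(bernoulliFun (n + 1) a / (n + 1)) := by
    rw [ofReal_neg, ofReal_natCast, hurwitzZeta_neg_natCast hn ha, ofReal_re]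
  have hleft : (hurwitzZeta a (-n - 1 : ℝ)).re = -(bernoulliFun (n + 2) a / (n + 2)) := by
    have := hurwitzZeta_neg_natCast n.succ_ne_zero ha
    rw [show ((-n - 1 : ℝ) : ℂ) = -(n + 1 : ℕ) by push_cast; ring, this, ofReal_re]
    push_cast
    ring
  have hcont : ContinuousOn (fun σ : ℝ ↦ (hurwitzZeta a σ).re) (Icc (-n - 1) (-n)) := fun σ hσ ↦ by
    have hσ1 : (σ : ℂ) ≠ 1 := ofReal_ne_one.2 (by linarith [hσ.2, n.cast_nonneg (α := ℝ)])
    exact (continuous_re.continuousAt.comp ((differentiableAt_hurwitzZeta a hσ1).continuousAt.comp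
      continuous_ofReal.continuousAt)).continuousWithinAt
  have hzero : (0 : ℝ) ∈ (fun σ : ℝ ↦ (hurwitzZeta a σ).re) '' Ioo (-n - 1) (-n) := by
    rcases mul_neg_iff.1 hneg with h | h
    · refine intermediate_value_Ioo' (by linarith) hcont ⟨?_, ?_⟩
      · rw [hright, neg_lt_zero]
        exact div_pos h.1 (by positivity)
      · rw [hleft, neg_pos]
        exact div_neg_of_neg_of_pos h.2 (by positivity)
    · refine intermediate_value_Ioo (by linarith) hcont ⟨?_, ?_⟩
      · rw [hleft, neg_lt_zero]
        exact div_pos h.2 (by positivity)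
      · rw [hright, neg_pos]
        exact div_neg_of_neg_of_pos h.1 (by positivity)
  obtain ⟨σ, hσ, hre⟩ := hzero
  exact ⟨σ, hσ, Complex.ext hre (hurwitzZeta_im_eq_zero hσ a)⟩

end Zeros

end

/-- For an odd integer `N ≥ 1` and `0 < a ≤ 1`, with `b⁻ ∈ [0,1/2)` and `b⁺ ∈ [1/2,1)`
roots of `B_{N+1}`, the Hurwitz zeta function has a real zero in `(-N-1, -N)` iff
`b⁻ < a < 1/2` or `b⁺ < a < 1`. -/
theorem hurwitzZeta_has_real_zero_iff_of_odd (N : ℕ) (hN1 : 1 ≤ N) (hN : Odd N) (a : ℝ)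
    (ha : 0 < a) (ha' : a ≤ 1) (bm bp : ℝ)
    (hbm : bm ∈ Set.Ico (0 : ℝ) (1 / 2)) (hbm0 : bernoulliPoly (N + 1) bm = 0)
    (hbp : bp ∈ Set.Ico (1 / 2 : ℝ) 1) (hbp0 : bernoulliPoly (N + 1) bp = 0) :
    (∃ σ : ℝ, σ ∈ Set.Ioo (-(N : ℝ) - 1) (-(N : ℝ)) ∧
        hurwitzZeta (a : UnitAddCircle) (σ : ℂ) = 0) ↔
      (bm < a ∧ a < 1 / 2) ∨ (bp < a ∧ a < 1) := by
  obtain ⟨k, rfl⟩ := hN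
  rw [bernoulliPoly_eq_bernoulliFun] at hbm0 hbp0
  have hb : bm ∈ Icc 0 (1 / 2) := Ico_subset_Icc_self hbm
  obtain rfl : bp = 1 - bm := eq_sub_of_add_eq'
    (add_eq_one_of_bernoulliFun_even_eq_zero hb (Ico_subset_Icc_self hbp) hbm0 hbp0)
  refine ⟨fun ⟨σ, hσ, hζ⟩ ↦ ?_, fun h ↦ ?_⟩
  · by_contra! h
    rcases ha'.eq_or_lt with rfl | ha1
    · rw [AddCircle.coe_period, ← AddCircle.coe_zero] at hζ
      exact hurwitzZeta_ne_zero hb hbm0 hσ (.inl ⟨le_rfl, hb.1⟩) hζ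
    · refine hurwitzZeta_ne_zero hb hbm0 hσ ?_ hζ
      rcases le_or_gt a bm with hab | hab
      · exact .inl ⟨ha.le, hab⟩
      · exact .inr ⟨h.1 hab, not_lt.1 fun h' ↦ (h.2 h').not_gt ha1⟩
  · exact exists_hurwitzZeta_eq_zero (by lia) ⟨ha.le, ha'⟩
      (bernoulliFun_mul_bernoulliFun_succ_neg hb hbm0 h)
end

section
/- The Hurwitz zeta function σ ↦ ζ(σ, a) with 0 < a ≤ 1 has a real zero in the open interval (0, 1) if and only if 0 < a < 1/2. -/
open HurwitzZeta Set

/-!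
Subtracting its pole `1 / x` at `0` from the kernel `K(x) = e^{-ax} / (1 - e^{-x})` carries the
Mellin representation of `Γ(s) ζ(s, a)` into the critical strip: for `0 < σ < 1`,
`Γ(σ) ζ(σ, a) = ∫₀^∞ x^{σ-1} (K(x) - 1/x) dx`.
If `1/2 ≤ a`, then `K(x) < 1/x` throughout, so `ζ(σ, a) < 0`. If `a < 1/2`, then
`K(x) - 1/x → 1/2 - a > 0` as `x → 0⁺`, which makes the integral positive for small `σ`, whereas
the pole at `1` forces `ζ(σ, a) → -∞` as `σ → 1⁻`.
-/

section Kernel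

open Asymptotics Filter MeasureTheory Topology

/-- The kernel `e^{-ax} / (1 - e^{-x}) = ∑ₙ e^{-(n + a)x}` whose Mellin transform is
`Γ(s) ζ(s, a)` for `1 < Re s`. -/
noncomputable def hurwitzKernel (a x : ℝ) : ℝ :=
  Real.exp (-(a * x)) / (1 - Real.exp (-x))

variable {a x : ℝ}

lemma one_sub_exp_neg_pos (hx : 0 < x) : 0 < 1 - Real.exp (-x) := by
  simpa using hx

lemma hasSum_hurwitzKernel (a : ℝ) (hx : 0 < x) :
    HasSum (fun n : ℕ ↦ Real.exp (-(n + a) * x)) (hurwitzKernel a x) := by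
  have hgeom := (hasSum_geometric_of_lt_one (Real.exp_pos (-x)).le
    (Real.exp_lt_one_iff.mpr (neg_lt_zero.mpr hx))).mul_left (Real.exp (-(a * x)))
  refine hgeom.congr_fun fun n ↦ ?_
  rw [← Real.exp_nat_mul, ← Real.exp_add]
  ring_nf

lemma hurwitzKernel_pos (a : ℝ) (hx : 0 < x) : 0 < hurwitzKernel a x :=
  div_pos (Real.exp_pos _) (one_sub_exp_neg_pos hx)

lemma inv_one_sub_exp_neg_le (hx : 0 < x) : (1 - Real.exp (-x))⁻¹ ≤ x⁻¹ + 1 := by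
  have hexp : Real.exp (-x) ≤ (x + 1)⁻¹ := by
    rw [Real.exp_neg]
    exact inv_anti₀ (by positivity) (Real.add_one_le_exp x)
  have hden : x / (x + 1) = 1 - (x + 1)⁻¹ := by
    field_simp
    ring
  calc (1 - Real.exp (-x))⁻¹ ≤ (x / (x + 1))⁻¹ := inv_anti₀ (by positivity) (by linarith)
    _ = x⁻¹ + 1 := by
        field_simp
        ring

-- Equivalent to `tanh (x / 2) ≤ x / 2`.
lemma inv_add_half_le_inv_one_sub_exp_neg (hx : 0 < x) :
    x⁻¹ + 1 / 2 ≤ (1 - Real.exp (-x))⁻¹ := by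
  have hexp : 1 < Real.exp x := Real.one_lt_exp_iff.mpr hx
  have hlog := Real.le_log_one_add_of_nonneg (sub_nonneg.mpr hexp.le)
  rw [add_sub_cancel, Real.log_exp, div_le_iff₀ (by linarith)] at hlog
  have hinv : (1 - Real.exp (-x))⁻¹ = Real.exp x / (Real.exp x - 1) := by
    rw [Real.exp_neg]
    field_simp
  rw [hinv, le_div_iff₀ (by linarith), ← sub_nonneg]
  have : Real.exp x - (x⁻¹ + 1 / 2) * (Real.exp x - 1) =
      (x * (Real.exp x - 1 + 2) - 2 * (Real.exp x - 1)) / (2 * x) := by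
    field_simp
    ring
  rw [this]
  exact div_nonneg (sub_nonneg.mpr hlog) (by positivity)

lemma hurwitzKernel_le (ha : 0 ≤ a) (hx : 0 < x) : hurwitzKernel a x ≤ x⁻¹ + 1 :=
  calc hurwitzKernel a x ≤ 1 / (1 - Real.exp (-x)) := by
        have := one_sub_exp_neg_pos hx
        unfold hurwitzKernel
        gcongr
        exact Real.exp_le_one_iff.mpr (neg_nonpos.mpr (by positivity))
    _ ≤ x⁻¹ + 1 := by
        rw [one_div]
        exact inv_one_sub_exp_neg_le hx

lemma le_hurwitzKernel (a : ℝ) (hx : 0 < x) :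
    (1 - a * x) * (x⁻¹ + 1 / 2) ≤ hurwitzKernel a x := by
  rw [hurwitzKernel, div_eq_mul_inv]
  exact mul_le_mul (Real.one_sub_le_exp_neg _) (inv_add_half_le_inv_one_sub_exp_neg hx)
    (by positivity) (Real.exp_pos _).le

lemma le_hurwitzKernel_sub_inv (a : ℝ) (hx : 0 < x) :
    1 / 2 - a - a / 2 * x ≤ hurwitzKernel a x - x⁻¹ := by
  have h := le_hurwitzKernel a hx
  have : (1 - a * x) * (x⁻¹ + 1 / 2) = x⁻¹ + (1 / 2 - a - a / 2 * x) := by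
    field_simp
    ring
  linarith

-- `e^{-x/2} / (1 - e^{-x}) = 1 / (2 sinh (x / 2))`, and `x / 2 < sinh (x / 2)`.
lemma hurwitzKernel_lt_inv (ha : 1 / 2 ≤ a) (hx : 0 < x) : hurwitzKernel a x < x⁻¹ := by
  have hsinh : x < 2 * Real.sinh (x / 2) := by
    linarith [Real.self_lt_sinh_iff.mpr (half_pos hx)]
  have hhalf : hurwitzKernel (1 / 2) x = (2 * Real.sinh (x / 2))⁻¹ := by
    have hsq : Real.exp (-x) = Real.exp (-(x / 2)) * Real.exp (-(x / 2)) := by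
      rw [← Real.exp_add]
      ring_nf
    have hinv : Real.exp (x / 2) * Real.exp (-(x / 2)) = 1 := by
      rw [← Real.exp_add, add_neg_cancel, Real.exp_zero]
    rw [hurwitzKernel, Real.sinh_eq, show 1 / 2 * x = x / 2 by ring, eq_comm, inv_eq_iff_eq_inv,
      inv_div, eq_div_iff (Real.exp_ne_zero _), hsq]
    linear_combination hinv
  calc hurwitzKernel a x ≤ hurwitzKernel (1 / 2) x := by
        have := one_sub_exp_neg_pos hx
        unfold hurwitzKernel
        gcongr
    _ = (2 * Real.sinh (x / 2))⁻¹ := hhalf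
    _ < x⁻¹ := inv_strictAnti₀ hx hsinh

lemma continuousOn_hurwitzKernel (a : ℝ) : ContinuousOn (hurwitzKernel a) (Ioi 0) :=
  ContinuousOn.div (by fun_prop) (by fun_prop) fun _ hx ↦ (one_sub_exp_neg_pos hx).ne'

lemma isBigO_hurwitzKernel_atTop (a : ℝ) :
    hurwitzKernel a =O[atTop] fun x ↦ Real.exp (-a * x) := by
  refine IsBigO.of_bound (1 - Real.exp (-1))⁻¹ ?_
  filter_upwards [eventually_ge_atTop 1] with x hx
  have hden := one_sub_exp_neg_pos one_pos
  rw [Real.norm_of_nonneg (hurwitzKernel_pos a (by linarith)).le, Real.norm_of_nonneg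
    (Real.exp_pos _).le, hurwitzKernel, div_eq_inv_mul, neg_mul]
  gcongr

lemma isBigO_hurwitzKernel_sub_inv_nhdsGT_zero (ha : 0 ≤ a) :
    (fun x ↦ hurwitzKernel a x - x⁻¹) =O[𝓝[>] 0] fun _ ↦ (1 : ℝ) := by
  refine IsBigO.of_bound (1 + 2 * a) ?_
  filter_upwards [Ioc_mem_nhdsGT one_pos] with x ⟨hx0, hx1⟩
  have hlower := le_hurwitzKernel_sub_inv a hx0
  have hupper := hurwitzKernel_le ha hx0
  rw [norm_one, mul_one, Real.norm_eq_abs, abs_le]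
  constructor <;> nlinarith

end Kernel

section Mellin

open Asymptotics Complex Filter MeasureTheory Topology

lemma hasMellin_cpow_Ioi_one (b : ℂ) {s : ℂ} (hs : s.re + b.re < 0) :
    HasMellin (indicator (Ioi 1) fun t : ℝ ↦ (t : ℂ) ^ b) s (-1 / (s + b)) := by
  have hre : (s - 1 + b).re < -1 := by
    simp only [add_re, sub_re, one_re]
    linarith
  have hsmul (t : ℝ) : (t : ℂ) ^ (s - 1) • (Ioi 1).indicator (fun t : ℝ ↦ (t : ℂ) ^ b) t =
      (Ioi 1).indicator (fun t : ℝ ↦ (t : ℂ) ^ (s - 1 + b)) t := by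
    by_cases ht : t ∈ Ioi (1 : ℝ)
    · have ht0 : (t : ℂ) ≠ 0 := ofReal_ne_zero.mpr (zero_lt_one.trans ht).ne'
      rw [indicator_of_mem ht, indicator_of_mem ht, smul_eq_mul, cpow_add _ _ ht0]
    · rw [indicator_of_notMem ht, indicator_of_notMem ht, smul_zero]
  have hsub : Ioi (1 : ℝ) ⊆ Ioi 0 := Ioi_subset_Ioi zero_le_one
  simp_rw [HasMellin, mellin, MellinConvergent, hsmul]
  constructor
  · exact ((integrableOn_Ioi_cpow_of_lt hre one_pos).integrable_indicator
      measurableSet_Ioi).integrableOn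
  · rw [setIntegral_indicator measurableSet_Ioi, inter_eq_right.mpr hsub,
      integral_Ioi_cpow_of_lt hre one_pos, ofReal_one, one_cpow]
    congr 1
    ring

lemma exists_differentiable_eq_sub_one_mul_hurwitzZeta (a : UnitAddCircle) :
    ∃ Z : ℂ → ℂ, Differentiable ℂ Z ∧ ∀ s ≠ 1, Z s = (s - 1) * hurwitzZeta a s := by
  set E : ℂ → ℂ := fun s ↦ hurwitzZeta a s - 1 / (s - 1) / Gammaℝ s
  have hE : Differentiable ℂ E := fun s ↦ by
    rcases eq_or_ne s 1 with rfl | hs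
    · exact differentiableAt_hurwitzZeta_sub_one_div a
    · simp only [E, div_eq_mul_inv _ (Gammaℝ _)]
      have hs' : s - 1 ≠ 0 := sub_ne_zero.mpr hs
      have hpole : DifferentiableAt ℂ (fun s : ℂ ↦ 1 / (s - 1)) s := by
        fun_prop (disch := exact hs')
      exact (differentiableAt_hurwitzZeta a hs).sub (hpole.mul (differentiable_Gammaℝ_inv s))
  refine ⟨fun s ↦ (s - 1) * E s + (Gammaℝ s)⁻¹,
    ((differentiable_id.sub_const 1).mul hE).add differentiable_Gammaℝ_inv, fun s hs ↦ ?_⟩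
  have hs' : s - 1 ≠ 0 := sub_ne_zero.mpr hs
  simp only [E]
  field_simp
  ring

lemma differentiableOn_Gamma_re_pos : DifferentiableOn ℂ Gamma {z | 0 < z.re} := fun z hz ↦
  (differentiableAt_Gamma z fun m hm ↦ by
    have : z.re ≤ 0 := by simp [hm]
    exact this.not_gt hz).differentiableWithinAt

variable {a : ℝ}

lemma mellin_hurwitzKernel (ha : 0 < a) (ha' : a ≤ 1) {s : ℂ} (hs : 1 < s.re) :
    mellin (fun x ↦ (hurwitzKernel a x : ℂ)) s = Gamma s * hurwitzZeta (a : UnitAddCircle) s := by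
  have hpos (n : ℕ) : 0 < n + a := by positivity
  have hmellin : HasSum (fun n : ℕ ↦ Gamma s * 1 / ((n + a : ℝ) : ℂ) ^ s)
      (mellin (fun x ↦ (hurwitzKernel a x : ℂ)) s) := by
    refine hasSum_mellin (fun n ↦ Or.inr (hpos n)) (zero_lt_one.trans hs) (fun x hx ↦ ?_) ?_
    · simpa using! hasSum_ofReal.mpr (hasSum_hurwitzKernel a hx)
    · simpa [abs_of_pos (hpos _)] using (Real.summable_one_div_nat_add_rpow a s.re).mpr hs
  refine hmellin.unique ?_
  convert! (hasSum_hurwitzZeta_of_one_lt_re ⟨ha.le, ha'⟩ hs).mul_left (Gamma s) using 2 with n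
  push_cast
  ring

/-- The kernel with its singularity `1 / x` at `0` cut off. Its Mellin transform converges for
`0 < Re s` and there continues `Γ(s) ζ(s, a) - 1 / (s - 1)`. The exponent `-1` is complex to match
`hasMellin_cpow_Ioc`. -/
noncomputable def truncatedHurwitzKernel (a x : ℝ) : ℂ :=
  hurwitzKernel a x - (Ioc 0 1).indicator (fun t : ℝ ↦ (t : ℂ) ^ (-1 : ℂ)) x

lemma locallyIntegrableOn_truncatedHurwitzKernel (a : ℝ) :
    LocallyIntegrableOn (truncatedHurwitzKernel a) (Ioi 0) := by
  have hkernel : ContinuousOn (fun x ↦ (hurwitzKernel a x : ℂ)) (Ioi 0) :=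
    continuous_ofReal.comp_continuousOn (continuousOn_hurwitzKernel a)
  have hpow : ContinuousOn (fun t : ℝ ↦ (t : ℂ) ^ (-1 : ℂ)) (Ioi 0) := fun t ht ↦
    (continuousAt_ofReal_cpow_const _ _ (Or.inr (ne_of_gt ht))).continuousWithinAt
  refine (hkernel.locallyIntegrableOn measurableSet_Ioi).sub fun x hx ↦ ?_
  obtain ⟨u, hu, hint⟩ := hpow.locallyIntegrableOn (μ := volume) measurableSet_Ioi x hx
  exact ⟨u, hu, hint.indicator measurableSet_Ioc⟩

lemma isBigO_truncatedHurwitzKernel_atTop (a : ℝ) :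
    truncatedHurwitzKernel a =O[atTop] fun x ↦ Real.exp (-a * x) := by
  refine (isBigO_norm_left.mpr (isBigO_hurwitzKernel_atTop a)).congr' ?_ .rfl |>.of_norm_left
  filter_upwards [eventually_gt_atTop 1] with x hx
  rw [truncatedHurwitzKernel, indicator_of_notMem fun h ↦ hx.not_ge h.2, sub_zero, norm_real]

lemma isBigO_truncatedHurwitzKernel_nhdsGT_zero (ha : 0 ≤ a) :
    truncatedHurwitzKernel a =O[𝓝[>] 0] fun x ↦ x ^ (-0 : ℝ) := by
  simp only [neg_zero, Real.rpow_zero]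
  refine (isBigO_norm_left.mpr (isBigO_hurwitzKernel_sub_inv_nhdsGT_zero ha)).congr' ?_ .rfl
    |>.of_norm_left
  filter_upwards [Ioc_mem_nhdsGT one_pos] with x hx
  rw [truncatedHurwitzKernel, indicator_of_mem hx, cpow_neg_one, ← ofReal_inv, ← ofReal_sub,
    norm_real]

lemma mellinConvergent_truncatedHurwitzKernel (ha : 0 < a) {s : ℂ} (hs : 0 < s.re) :
    MellinConvergent (truncatedHurwitzKernel a) s :=
  mellinConvergent_of_isBigO_rpow_exp ha (locallyIntegrableOn_truncatedHurwitzKernel a)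
    (isBigO_truncatedHurwitzKernel_atTop a) (isBigO_truncatedHurwitzKernel_nhdsGT_zero ha.le) hs

lemma differentiableAt_mellin_truncatedHurwitzKernel (ha : 0 < a) {s : ℂ} (hs : 0 < s.re) :
    DifferentiableAt ℂ (mellin (truncatedHurwitzKernel a)) s :=
  mellin_differentiableAt_of_isBigO_rpow_exp ha (locallyIntegrableOn_truncatedHurwitzKernel a)
    (isBigO_truncatedHurwitzKernel_atTop a) (isBigO_truncatedHurwitzKernel_nhdsGT_zero ha.le) hs

lemma mellin_truncatedHurwitzKernel_of_one_lt_re (ha : 0 < a) (ha' : a ≤ 1) {s : ℂ}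
    (hs : 1 < s.re) :
    mellin (truncatedHurwitzKernel a) s =
      Gamma s * hurwitzZeta (a : UnitAddCircle) s - 1 / (s - 1) := by
  have hpow := hasMellin_cpow_Ioc (-1) (s := s) (by simpa using hs)
  have hsum := (hasMellin_add
    (mellinConvergent_truncatedHurwitzKernel ha (zero_lt_one.trans hs)) hpow.1).2
  simp only [truncatedHurwitzKernel, sub_add_cancel] at hsum
  rw [mellin_hurwitzKernel ha ha' hs, hpow.2, ← sub_eq_add_neg] at hsum
  exact eq_sub_of_add_eq hsum.symm

lemma mellin_truncatedHurwitzKernel (ha : 0 < a) (ha' : a ≤ 1) {s : ℂ} (hs : 0 < s.re)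
    (hs1 : s ≠ 1) :
    mellin (truncatedHurwitzKernel a) s =
      Gamma s * hurwitzZeta (a : UnitAddCircle) s - 1 / (s - 1) := by
  obtain ⟨Z, hZ, hZ_eq⟩ := exists_differentiable_eq_sub_one_mul_hurwitzZeta a
  set U : Set ℂ := {z | 0 < z.re}
  have hU : IsOpen U := isOpen_lt continuous_const continuous_re
  have hleft : AnalyticOnNhd ℂ (fun z ↦ (z - 1) * mellin (truncatedHurwitzKernel a) z) U :=
    DifferentiableOn.analyticOnNhd (fun z hz ↦ ((differentiableAt_id.sub_const 1).mul
      (differentiableAt_mellin_truncatedHurwitzKernel ha hz)).differentiableWithinAt) hU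
  have hright : AnalyticOnNhd ℂ (fun z ↦ Gamma z * Z z - 1) U :=
    ((differentiableOn_Gamma_re_pos.mul hZ.differentiableOn).sub_const 1).analyticOnNhd hU
  have hnear : (fun z ↦ (z - 1) * mellin (truncatedHurwitzKernel a) z) =ᶠ[𝓝 2]
      fun z ↦ Gamma z * Z z - 1 := by
    filter_upwards [(isOpen_lt continuous_const continuous_re).mem_nhds
      (show (1 : ℝ) < (2 : ℂ).re by simp)] with z (hz : 1 < z.re)
    have hz1 : z ≠ 1 := by
      rintro rfl
      simp at hz
    have : z - 1 ≠ 0 := sub_ne_zero.mpr hz1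
    rw [mellin_truncatedHurwitzKernel_of_one_lt_re ha ha' hz, hZ_eq z hz1]
    field_simp
  have heq := hleft.eqOn_of_preconnected_of_eventuallyEq hright
    (convex_halfSpace_re_gt 0).isPreconnected (show (2 : ℂ) ∈ U by simp [U]) hnear hs
  have : s - 1 ≠ 0 := sub_ne_zero.mpr hs1
  simp only [hZ_eq s hs1] at heq
  refine mul_left_cancel₀ this (heq.trans ?_)
  field_simp

theorem hasMellin_hurwitzKernel_sub_inv (ha : 0 < a) (ha' : a ≤ 1) {s : ℂ} (hs0 : 0 < s.re)
    (hs1 : s.re < 1) :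
    HasMellin (fun x ↦ ((hurwitzKernel a x - x⁻¹ : ℝ) : ℂ)) s
      (Gamma s * hurwitzZeta (a : UnitAddCircle) s) := by
  have hne : s ≠ 1 := by
    rintro rfl
    simp at hs1
  have htail := hasMellin_cpow_Ioi_one (-1) (s := s) (by simpa using hs1)
  obtain ⟨hconv, heq⟩ := hasMellin_sub (mellinConvergent_truncatedHurwitzKernel ha hs0) htail.1
  have hsplit : EqOn
      (fun t : ℝ ↦ (t : ℂ) ^ (s - 1) • (truncatedHurwitzKernel a t -
        (Ioi 1).indicator (fun t : ℝ ↦ (t : ℂ) ^ (-1 : ℂ)) t))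
      (fun t : ℝ ↦ (t : ℂ) ^ (s - 1) • ((hurwitzKernel a t - t⁻¹ : ℝ) : ℂ)) (Ioi 0) := by
    intro t ht
    have : (Ioc 0 1).indicator (fun t : ℝ ↦ (t : ℂ) ^ (-1 : ℂ)) t +
        (Ioi 1).indicator (fun t : ℝ ↦ (t : ℂ) ^ (-1 : ℂ)) t = (t : ℂ)⁻¹ := by
      rcases le_or_gt t 1 with h | h
      · simp [indicator, h, mem_Ioi.mp ht, h.not_gt, cpow_neg_one]
      · simp [indicator, h, h.not_ge, cpow_neg_one]
    simp only [truncatedHurwitzKernel, sub_sub, this]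
    push_cast
    rfl
  refine ⟨hconv.congr_fun hsplit measurableSet_Ioi, ?_⟩
  rw [mellin, ← setIntegral_congr_fun measurableSet_Ioi hsplit]
  refine heq.trans ?_
  rw [mellin_truncatedHurwitzKernel ha ha' hs0 hne, htail.2]
  ring

end Mellin

section RealZero

open Complex Filter MeasureTheory Topology

variable {a σ : ℝ}

lemma cpow_smul_hurwitzKernel_sub_inv (a σ : ℝ) {x : ℝ} (hx : 0 ≤ x) :
    (x : ℂ) ^ ((σ : ℂ) - 1) • ((hurwitzKernel a x - x⁻¹ : ℝ) : ℂ) =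
      ((x ^ (σ - 1) * (hurwitzKernel a x - x⁻¹) : ℝ) : ℂ) := by
  simp only [ofReal_mul, ofReal_cpow hx, ofReal_sub, ofReal_one, smul_eq_mul]

lemma integrableOn_rpow_mul_hurwitzKernel_sub_inv (ha : 0 < a) (ha' : a ≤ 1)
    (hσ : σ ∈ Ioo 0 1) :
    IntegrableOn (fun x ↦ x ^ (σ - 1) * (hurwitzKernel a x - x⁻¹)) (Ioi 0) := by
  have hconv := (hasMellin_hurwitzKernel_sub_inv ha ha' (s := σ) hσ.1 hσ.2).1
  exact_mod_cast (hconv.congr_fun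
    (fun x hx ↦ cpow_smul_hurwitzKernel_sub_inv a σ (le_of_lt hx)) measurableSet_Ioi).re

theorem Gamma_mul_hurwitzZeta_eq_setIntegral (ha : 0 < a) (ha' : a ≤ 1) (hσ : σ ∈ Ioo 0 1) :
    Gamma σ * hurwitzZeta (a : UnitAddCircle) σ =
      ((∫ x in Ioi 0, x ^ (σ - 1) * (hurwitzKernel a x - x⁻¹) : ℝ) : ℂ) := by
  rw [← (hasMellin_hurwitzKernel_sub_inv ha ha' (s := σ) hσ.1 hσ.2).2, mellin,
    setIntegral_congr_fun measurableSet_Ioi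
      fun x hx ↦ cpow_smul_hurwitzKernel_sub_inv a σ (le_of_lt hx)]
  exact integral_ofReal

lemma hurwitzZeta_eq_ofReal_re (ha : 0 < a) (ha' : a ≤ 1) (hσ : σ ∈ Ioo 0 1) :
    hurwitzZeta (a : UnitAddCircle) σ = ((hurwitzZeta (a : UnitAddCircle) σ).re : ℂ) := by
  have h := Gamma_mul_hurwitzZeta_eq_setIntegral ha ha' hσ
  rw [Gamma_ofReal, mul_comm, ← eq_div_iff (ofReal_ne_zero.mpr (Real.Gamma_pos_of_pos hσ.1).ne'),
    ← ofReal_div] at h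
  rw [h, ofReal_re]

lemma Gamma_mul_re_hurwitzZeta (ha : 0 < a) (ha' : a ≤ 1) (hσ : σ ∈ Ioo 0 1) :
    Real.Gamma σ * (hurwitzZeta (a : UnitAddCircle) σ).re =
      ∫ x in Ioi 0, x ^ (σ - 1) * (hurwitzKernel a x - x⁻¹) := by
  have h := congrArg re (Gamma_mul_hurwitzZeta_eq_setIntegral ha ha' hσ)
  rwa [Gamma_ofReal, re_ofReal_mul, ofReal_re] at h

lemma re_hurwitzZeta_neg (ha : 1 / 2 ≤ a) (ha' : a ≤ 1) (hσ : σ ∈ Ioo 0 1) :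
    (hurwitzZeta (a : UnitAddCircle) σ).re < 0 := by
  have ha0 : 0 < a := by linarith
  have hpos : ∀ x ∈ Ioi (0 : ℝ), 0 < -(x ^ (σ - 1) * (hurwitzKernel a x - x⁻¹)) := fun x hx ↦
    neg_pos.mpr <| mul_neg_of_pos_of_neg (Real.rpow_pos_of_pos hx _) <|
      sub_neg.mpr <| hurwitzKernel_lt_inv ha hx
  have hint : 0 < ∫ x in Ioi 0, -(x ^ (σ - 1) * (hurwitzKernel a x - x⁻¹)) := by
    rw [setIntegral_pos_iff_support_of_nonneg_ae
      (ae_restrict_of_forall_mem measurableSet_Ioi fun x hx ↦ (hpos x hx).le)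
      (integrableOn_rpow_mul_hurwitzKernel_sub_inv ha0 ha' hσ).neg,
      inter_eq_right.mpr fun x hx ↦ Function.mem_support.mpr (hpos x hx).ne', Real.volume_Ioi]
    exact ENNReal.zero_lt_top
  rw [integral_neg, ← Gamma_mul_re_hurwitzZeta ha0 ha' hσ, neg_pos] at hint
  exact neg_of_mul_neg_right hint (Real.Gamma_pos_of_pos hσ.1).le

lemma integrableOn_Ioc_rpow_sub_one {r : ℝ} (hr : 0 < r) :
    IntegrableOn (fun x : ℝ ↦ x ^ (r - 1)) (Ioc 0 1) :=
  (intervalIntegrable_iff_integrableOn_Ioc_of_le zero_le_one).mp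
    (intervalIntegral.intervalIntegrable_rpow' (by linarith))

lemma setIntegral_Ioc_rpow_sub_one {r : ℝ} (hr : 0 < r) :
    ∫ x in Ioc (0 : ℝ) 1, x ^ (r - 1) = 1 / r := by
  rw [← intervalIntegral.integral_of_le zero_le_one, integral_rpow (Or.inl (by linarith)),
    sub_add_cancel, Real.one_rpow, Real.zero_rpow hr.ne', sub_zero]

lemma le_setIntegral_Ioc_rpow_mul_hurwitzKernel_sub_inv (ha : 0 < a) (ha' : a ≤ 1)
    (hσ : σ ∈ Ioo 0 1) :
    (1 / 2 - a) / σ - a / 2 / (σ + 1) ≤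
      ∫ x in Ioc 0 1, x ^ (σ - 1) * (hurwitzKernel a x - x⁻¹) := by
  have hσ1 : 0 < σ + 1 := by linarith [hσ.1]
  have hconst := (integrableOn_Ioc_rpow_sub_one hσ.1).const_mul (1 / 2 - a)
  have hlin := (integrableOn_Ioc_rpow_sub_one hσ1).const_mul (a / 2)
  calc (1 / 2 - a) / σ - a / 2 / (σ + 1)
      = ∫ x in Ioc 0 1, ((1 / 2 - a) * x ^ (σ - 1) - a / 2 * x ^ (σ + 1 - 1)) := by
        rw [integral_sub hconst hlin, integral_const_mul, integral_const_mul,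
          setIntegral_Ioc_rpow_sub_one hσ.1, setIntegral_Ioc_rpow_sub_one hσ1, mul_one_div,
          mul_one_div]
    _ ≤ ∫ x in Ioc 0 1, x ^ (σ - 1) * (hurwitzKernel a x - x⁻¹) := by
        refine setIntegral_mono_on (hconst.sub hlin)
          ((integrableOn_rpow_mul_hurwitzKernel_sub_inv ha ha' hσ).mono_set Ioc_subset_Ioi_self)
          measurableSet_Ioc fun x hx ↦ ?_
        have hsucc : x ^ (σ + 1 - 1) = x ^ (σ - 1) * x := by
          rw [← Real.rpow_add_one hx.1.ne']
          ring_nf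
        calc _ = x ^ (σ - 1) * (1 / 2 - a - a / 2 * x) := by
              rw [hsucc]
              ring
          _ ≤ _ := mul_le_mul_of_nonneg_left (le_hurwitzKernel_sub_inv a hx.1)
              (Real.rpow_nonneg hx.1.le _)

lemma le_setIntegral_Ioi_one_rpow_mul_hurwitzKernel_sub_inv (ha : 0 < a) (ha' : a ≤ 1)
    (hσ : σ ∈ Ioo 0 1) :
    -(1 / (1 - σ)) ≤ ∫ x in Ioi 1, x ^ (σ - 1) * (hurwitzKernel a x - x⁻¹) := by
  have hexp : σ - 2 < -1 := by linarith [hσ.2]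
  calc -(1 / (1 - σ)) = ∫ x in Ioi (1 : ℝ), -x ^ (σ - 2) := by
        rw [integral_neg, integral_Ioi_rpow_of_lt hexp one_pos, Real.one_rpow, ← neg_div_neg_eq 1]
        ring_nf
    _ ≤ ∫ x in Ioi 1, x ^ (σ - 1) * (hurwitzKernel a x - x⁻¹) := by
        refine setIntegral_mono_on (integrableOn_Ioi_rpow_of_lt hexp one_pos).neg
          ((integrableOn_rpow_mul_hurwitzKernel_sub_inv ha ha' hσ).mono_set
            (Ioi_subset_Ioi zero_le_one)) measurableSet_Ioi fun x hx ↦ ?_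
        have hx0 : 0 < x := one_pos.trans hx
        have hpred : x ^ (σ - 2) = x ^ (σ - 1) * x⁻¹ := by
          rw [← Real.rpow_neg_one x, ← Real.rpow_add hx0]
          ring_nf
        rw [hpred, ← mul_neg]
        exact mul_le_mul_of_nonneg_left (by linarith [hurwitzKernel_pos a hx0])
          (Real.rpow_nonneg hx0.le _)

lemma le_Gamma_mul_re_hurwitzZeta (ha : 0 < a) (ha' : a ≤ 1) (hσ : σ ∈ Ioo 0 1) :
    (1 / 2 - a) / σ - a / 2 / (σ + 1) - 1 / (1 - σ) ≤
      Real.Gamma σ * (hurwitzZeta (a : UnitAddCircle) σ).re := by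
  have hint := integrableOn_rpow_mul_hurwitzKernel_sub_inv ha ha' hσ
  rw [Gamma_mul_re_hurwitzZeta ha ha' hσ, ← Ioc_union_Ioi_eq_Ioi zero_le_one,
    setIntegral_union (Ioc_disjoint_Ioi le_rfl) measurableSet_Ioi
      (hint.mono_set Ioc_subset_Ioi_self) (hint.mono_set (Ioi_subset_Ioi zero_le_one))]
  linarith [le_setIntegral_Ioc_rpow_mul_hurwitzKernel_sub_inv ha ha' hσ,
    le_setIntegral_Ioi_one_rpow_mul_hurwitzKernel_sub_inv ha ha' hσ]

lemma exists_re_hurwitzZeta_pos (ha : 0 < a) (ha' : a < 1 / 2) :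
    ∃ σ ∈ Ioo (0 : ℝ) 1, 0 < (hurwitzZeta (a : UnitAddCircle) σ).re := by
  set σ : ℝ := (1 / 2 - a) / 3 with hσ_def
  have hσ : σ ∈ Ioo (0 : ℝ) 1 := ⟨by linarith, by linarith⟩
  have hmain : (1 / 2 - a) / σ = 3 := by
    rw [hσ_def, div_div_cancel₀ (by linarith)]
  have hlin : a / 2 / (σ + 1) ≤ 1 := by
    rw [div_le_one (by linarith)]
    linarith
  have htail : 1 / (1 - σ) < 2 := by
    rw [div_lt_iff₀ (by linarith)]
    linarith
  have hbound := le_Gamma_mul_re_hurwitzZeta ha (by linarith) hσ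
  exact ⟨σ, hσ, pos_of_mul_pos_right (by linarith) (Real.Gamma_pos_of_pos hσ.1).le⟩

lemma exists_re_hurwitzZeta_neg (a : UnitAddCircle) :
    ∃ σ ∈ Ioo (0 : ℝ) 1, (hurwitzZeta a σ).re < 0 := by
  have hofReal : Tendsto (fun σ : ℝ ↦ (σ : ℂ)) (𝓝[<] 1) (𝓝[≠] 1) :=
    tendsto_nhdsWithin_iff.mpr
      ⟨(continuous_ofReal.tendsto' 1 1 ofReal_one).mono_left nhdsWithin_le_nhds, by
        filter_upwards [self_mem_nhdsWithin] with σ hσ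
        exact ofReal_ne_one.mpr (ne_of_lt hσ)⟩
  have hres : Tendsto (fun σ : ℝ ↦ (σ - 1) * (hurwitzZeta a σ).re) (𝓝[<] 1) (𝓝 1) := by
    simpa [Function.comp_def, ← ofReal_one, ← ofReal_sub] using
      (continuous_re.tendsto 1).comp ((hurwitzZeta_residue_one a).comp hofReal)
  obtain ⟨σ, hpos, hσ⟩ :=
    ((hres.eventually_const_lt one_pos).and (Ioo_mem_nhdsLT one_pos)).exists
  exact ⟨σ, hσ, neg_of_mul_pos_right hpos (sub_neg.mpr hσ.2).le⟩

lemma continuousOn_re_hurwitzZeta (a : UnitAddCircle) :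
    ContinuousOn (fun σ : ℝ ↦ (hurwitzZeta a σ).re) {1}ᶜ := fun _ hσ ↦
  (continuous_re.continuousAt.comp <| (differentiableAt_hurwitzZeta a
    (ofReal_ne_one.mpr hσ)).continuousAt.comp
      continuous_ofReal.continuousAt).continuousWithinAt

lemma exists_re_hurwitzZeta_eq_zero (ha : 0 < a) (ha' : a < 1 / 2) :
    ∃ σ ∈ Ioo (0 : ℝ) 1, (hurwitzZeta (a : UnitAddCircle) σ).re = 0 := by
  obtain ⟨σ, hσ, hpos⟩ := exists_re_hurwitzZeta_pos ha ha'
  obtain ⟨τ, hτ, hneg⟩ := exists_re_hurwitzZeta_neg a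
  exact isPreconnected_Ioo.intermediate_value hτ hσ
    ((continuousOn_re_hurwitzZeta a).mono fun _ hx ↦ hx.2.ne) ⟨hneg.le, hpos.le⟩

end RealZero

/-- The Hurwitz zeta function `σ ↦ ζ(σ, a)` with `0 < a ≤ 1` has a real zero in `(0, 1)`
iff `0 < a < 1/2`. -/
theorem hurwitzZeta_has_real_zero_in_Ioo_zero_one_iff (a : ℝ) (ha : 0 < a) (ha' : a ≤ 1) :
    (∃ σ : ℝ, σ ∈ Set.Ioo (0 : ℝ) 1 ∧ hurwitzZeta (a : UnitAddCircle) (σ : ℂ) = 0) ↔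
      0 < a ∧ a < 1 / 2 := by
  constructor
  · rintro ⟨σ, hσ, hzero⟩
    refine ⟨ha, lt_of_not_ge fun hhalf ↦ ?_⟩
    have hneg := re_hurwitzZeta_neg hhalf ha' hσ
    rw [hzero, Complex.zero_re] at hneg
    exact hneg.false
  · rintro ⟨-, hhalf⟩
    obtain ⟨σ, hσ, hre⟩ := exists_re_hurwitzZeta_eq_zero ha hhalf
    refine ⟨σ, hσ, ?_⟩
    rw [hurwitzZeta_eq_ofReal_re ha ha' hσ, hre, Complex.ofReal_zero]
end

section
/- Let b₂⁻ = (3 − √3)/6 and suppose 0 < a ≤ b₂⁻. Then ζ(σ, a) < 0 for every real σ with −2 < σ < −1. -/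
open HurwitzZeta Set

/-!
For real `s > 1`, Hurwitz's formula expresses `ζ(1 - s, a)` through the periodic zeta function
`E(s) = ∑ n ≥ 1, exp (2πina) / n ^ s` as a positive multiple of
`cos (πs/2) * Re E(s) + sin (πs/2) * Im E(s)`, and
`Γ(s) * E(s) = ∫ t > 0, t ^ (s - 1) / (exp (t - 2πia) - 1)`.
For `0 < a < 1/2` the imaginary part of this integrand is positive, hence so is `Im E(s)`. For
`0 < a < 1/4` its real part changes sign exactly once, from negative to positive, hence `Re E(s)`
stays nonnegative for all larger `s` once it is nonnegative at one point. That point is `s = 2`,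
where `Re E(2) = π² * B₂(a)`. If `2 < s ≤ 3` modulo `4`, then `cos (πs/2) ≤ 0` and
`sin (πs/2) < 0`, so that `ζ(1 - s, a) < 0`.
-/

open Complex (I reCLM imCLM)
open MeasureTheory
open Real (pi_pos)
open scoped Real ComplexConjugate

section Mellin

variable {E F : Type*} [NormedAddCommGroup E] [NormedSpace ℂ E] [NormedAddCommGroup F]
  [NormedSpace ℝ F] {f : ℝ → E} {s : ℝ}

lemma cpow_ofReal_smul_eqOn_Ioi (f : ℝ → E) (s : ℝ) :
    EqOn (fun t : ℝ ↦ (t : ℂ) ^ ((s : ℂ) - 1) • f t) (fun t ↦ t ^ (s - 1) • f t) (Ioi 0) := by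
  intro t ht
  dsimp only
  rw [← Complex.coe_smul, Complex.ofReal_cpow (le_of_lt ht), Complex.ofReal_sub,
    Complex.ofReal_one]

lemma integrableOn_rpow_smul_of_mellinConvergent (hf : MellinConvergent f s) :
    IntegrableOn (fun t ↦ t ^ (s - 1) • f t) (Ioi 0) :=
  hf.congr_fun (cpow_ofReal_smul_eqOn_Ioi f s) measurableSet_Ioi

lemma integrableOn_rpow_smul_clm_of_mellinConvergent (L : E →L[ℝ] F)
    (hf : MellinConvergent f s) : IntegrableOn (fun t ↦ t ^ (s - 1) • L (f t)) (Ioi 0) := by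
  simpa only [IntegrableOn, map_smul] using
    L.integrable_comp (integrableOn_rpow_smul_of_mellinConvergent hf)

lemma clm_mellin_ofReal [CompleteSpace E] [CompleteSpace F] (L : E →L[ℝ] F)
    (hf : MellinConvergent f s) :
    L (mellin f s) = ∫ t in Ioi 0, t ^ (s - 1) • L (f t) := by
  rw [mellin, setIntegral_congr_fun measurableSet_Ioi (cpow_ofReal_smul_eqOn_Ioi f s),
    ← L.integral_comp_comm (integrableOn_rpow_smul_of_mellinConvergent hf)]
  simp only [map_smul]

end Mellin

-- With `x` the point where `f` changes sign, `x ^ (q - p) * (t ^ p * f t) ≤ t ^ q * f t`.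
lemma setIntegral_Ioi_rpow_mul_nonneg_of_sign_change {f : ℝ → ℝ} {x p q : ℝ} (hx : 0 ≤ x)
    (hpq : p ≤ q) (hneg : ∀ t, 0 < t → t ≤ x → f t ≤ 0) (hpos : ∀ t, 0 < t → x ≤ t → 0 ≤ f t)
    (hp : IntegrableOn (fun t ↦ t ^ p * f t) (Ioi 0))
    (hq : IntegrableOn (fun t ↦ t ^ q * f t) (Ioi 0))
    (h : 0 ≤ ∫ t in Ioi 0, t ^ p * f t) : 0 ≤ ∫ t in Ioi 0, t ^ q * f t := by
  have hqp : 0 ≤ q - p := sub_nonneg.mpr hpq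
  calc
    0 ≤ x ^ (q - p) * ∫ t in Ioi 0, t ^ p * f t := by positivity
    _ = ∫ t in Ioi 0, x ^ (q - p) * (t ^ p * f t) := (integral_const_mul _ _).symm
    _ ≤ ∫ t in Ioi 0, t ^ q * f t := by
      refine setIntegral_mono_on (hp.const_mul _) hq measurableSet_Ioi fun t (ht : 0 < t) ↦ ?_
      have hsplit : t ^ q * f t = t ^ (q - p) * (t ^ p * f t) := by
        rw [← mul_assoc, ← Real.rpow_add ht, sub_add_cancel]
      have htp : 0 ≤ t ^ p := by positivity
      rw [hsplit]
      rcases le_total t x with htx | hxt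
      · exact mul_le_mul_of_nonpos_right (Real.rpow_le_rpow ht.le htx hqp)
          (mul_nonpos_of_nonneg_of_nonpos htp (hneg t ht htx))
      · exact mul_le_mul_of_nonneg_right (Real.rpow_le_rpow hx hxt hqp)
          (mul_nonneg htp (hpos t ht hxt))

/-- The Bose–Einstein kernel, equal to `∑ n ≥ 1, exp (2πina) * exp (-nt)` for `t > 0`, whose
Mellin transform in `t` is `Γ(s)` times the periodic zeta function `expZeta a s`. -/
noncomputable def expZetaKernel (a t : ℝ) : ℂ :=
  (Complex.exp (t - 2 * π * I * a) - 1)⁻¹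

section Kernel

variable {a t : ℝ}

lemma exp_sub_two_pi_I_mul_re (a t : ℝ) :
    (Complex.exp (t - 2 * π * I * a)).re = Real.exp t * Real.cos (2 * π * a) := by
  simp [Complex.exp_re]

lemma exp_sub_two_pi_I_mul_im (a t : ℝ) :
    (Complex.exp (t - 2 * π * I * a)).im = -(Real.exp t * Real.sin (2 * π * a)) := by
  simp [Complex.exp_im]

lemma norm_exp_sub_two_pi_I_mul (a t : ℝ) :
    ‖Complex.exp (t - 2 * π * I * a)‖ = Real.exp t := by
  simp [Complex.norm_exp]

lemma exp_sub_two_pi_I_mul_sub_one_ne_zero (a : ℝ) (ht : 0 < t) :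
    Complex.exp (t - 2 * π * I * a) - 1 ≠ 0 := by
  intro h
  have hnorm := norm_exp_sub_two_pi_I_mul a t
  rw [sub_eq_zero.mp h, norm_one] at hnorm
  exact (Real.one_lt_exp_iff.mpr ht).ne hnorm

lemma expZetaKernel_re (a t : ℝ) :
    (expZetaKernel a t).re = (Real.exp t * Real.cos (2 * π * a) - 1) /
      Complex.normSq (Complex.exp (t - 2 * π * I * a) - 1) := by
  rw [expZetaKernel, Complex.inv_re, Complex.sub_re, Complex.one_re, exp_sub_two_pi_I_mul_re]

lemma expZetaKernel_im (a t : ℝ) :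
    (expZetaKernel a t).im = Real.exp t * Real.sin (2 * π * a) /
      Complex.normSq (Complex.exp (t - 2 * π * I * a) - 1) := by
  rw [expZetaKernel, Complex.inv_im, Complex.sub_im, Complex.one_im, sub_zero,
    exp_sub_two_pi_I_mul_im, neg_neg]

lemma expZetaKernel_im_pos (ha : 0 < a) (ha' : a < 1 / 2) (ht : 0 < t) :
    0 < (expZetaKernel a t).im := by
  have hsin : 0 < Real.sin (2 * π * a) :=
    Real.sin_pos_of_pos_of_lt_pi (by positivity) (by nlinarith [pi_pos])
  have hden := Complex.normSq_pos.mpr (exp_sub_two_pi_I_mul_sub_one_ne_zero a ht)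
  rw [expZetaKernel_im]
  positivity

lemma expZetaKernel_re_nonpos (ha : 0 < Real.cos (2 * π * a))
    (ht : t ≤ -Real.log (Real.cos (2 * π * a))) : (expZetaKernel a t).re ≤ 0 := by
  rw [expZetaKernel_re]
  refine div_nonpos_of_nonpos_of_nonneg ?_ (Complex.normSq_nonneg _)
  rwa [sub_nonpos, ← le_div_iff₀ ha, one_div, ← Real.le_log_iff_exp_le (by positivity),
    Real.log_inv]

lemma expZetaKernel_re_nonneg (ha : 0 < Real.cos (2 * π * a))
    (ht : -Real.log (Real.cos (2 * π * a)) ≤ t) : 0 ≤ (expZetaKernel a t).re := by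
  rw [expZetaKernel_re]
  refine div_nonneg ?_ (Complex.normSq_nonneg _)
  rwa [sub_nonneg, ← div_le_iff₀ ha, one_div, ← Real.log_le_iff_le_exp (by positivity),
    Real.log_inv]

lemma hasSum_expZetaKernel (a : ℝ) (ht : 0 < t) :
    HasSum (fun n : ℕ ↦ Complex.exp (2 * π * I * a * (n + 1)) * Real.exp (-(n + 1) * t))
      (expZetaKernel a t) := by
  set w : ℂ := Complex.exp (t - 2 * π * I * a) with hw
  have hw_norm : ‖w⁻¹‖ < 1 := by
    rw [norm_inv, norm_exp_sub_two_pi_I_mul]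
    exact inv_lt_one_of_one_lt₀ (Real.one_lt_exp_iff.mpr ht)
  have hw_ne : w ≠ 0 := Complex.exp_ne_zero _
  have hsum := (hasSum_geometric_of_norm_lt_one hw_norm).mul_left w⁻¹
  have hlimit : w⁻¹ * (1 - w⁻¹)⁻¹ = expZetaKernel a t := by
    rw [expZetaKernel, ← hw, ← mul_inv, mul_sub, mul_one, mul_inv_cancel₀ hw_ne]
  rw [hlimit] at hsum
  refine hsum.congr_fun fun n ↦ ?_
  rw [← pow_succ', hw, ← Complex.exp_neg, ← Complex.exp_nat_mul, Complex.ofReal_exp,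
    ← Complex.exp_add]
  congr 1
  push_cast
  ring

lemma norm_expZetaKernel_le (a : ℝ) (ht : 0 < t) :
    ‖expZetaKernel a t‖ ≤ t⁻¹ * Real.exp (-(1 / 2) * t) := by
  have hsinh : t / 2 ≤ Real.sinh (t / 2) := Real.self_le_sinh_iff.mpr (by positivity)
  have hexp : Real.exp t - 1 = 2 * Real.exp (t / 2) * Real.sinh (t / 2) := by
    rw [Real.sinh_eq, Real.exp_neg]
    field_simp
    rw [← Real.exp_nat_mul]
    ring_nf
  have hlower : t * Real.exp (t / 2) ≤ ‖Complex.exp (t - 2 * π * I * a) - 1‖ := by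
    calc
      t * Real.exp (t / 2) = 2 * Real.exp (t / 2) * (t / 2) := by ring
      _ ≤ 2 * Real.exp (t / 2) * Real.sinh (t / 2) := by gcongr
      _ = Real.exp t - 1 := hexp.symm
      _ ≤ ‖Complex.exp (t - 2 * π * I * a) - 1‖ := by
        simpa only [norm_exp_sub_two_pi_I_mul, norm_one] using
          norm_sub_norm_le (Complex.exp (t - 2 * π * I * a)) 1
  rw [expZetaKernel, norm_inv, show -(1 / 2) * t = -(t / 2) by ring, Real.exp_neg, ← mul_inv]
  gcongr

lemma mellinConvergent_expZetaKernel (a : ℝ) {s : ℂ} (hs : 1 < s.re) :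
    MellinConvergent (expZetaKernel a) s := by
  have hdom : IntegrableOn (fun t : ℝ ↦ t ^ (s.re - 2) * Real.exp (-(1 / 2) * t)) (Ioi 0) := by
    simpa only [Real.rpow_one] using integrableOn_rpow_mul_exp_neg_mul_rpow
      (s := s.re - 2) (by linarith) one_pos (b := 1 / 2) (by norm_num)
  refine hdom.mono' (by unfold expZetaKernel; fun_prop) ?_
  refine ae_restrict_of_forall_mem measurableSet_Ioi fun t (ht : 0 < t) ↦ ?_
  calc
    ‖(t : ℂ) ^ (s - 1) • expZetaKernel a t‖ = t ^ (s.re - 1) * ‖expZetaKernel a t‖ := by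
      rw [norm_smul, Complex.norm_cpow_eq_rpow_re_of_pos ht, Complex.sub_re, Complex.one_re]
    _ ≤ t ^ (s.re - 1) * (t⁻¹ * Real.exp (-(1 / 2) * t)) := by
      gcongr
      exact norm_expZetaKernel_le a ht
    _ = t ^ (s.re - 2) * Real.exp (-(1 / 2) * t) := by
      rw [← mul_assoc, ← Real.rpow_neg_one, ← Real.rpow_add ht]
      ring_nf

end Kernel

section ExpZeta

variable {a s : ℝ}

lemma mellin_expZetaKernel (a : ℝ) {s : ℂ} (hs : 1 < s.re) :
    mellin (expZetaKernel a) s = Complex.Gamma s * expZeta a s := by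
  have hsum : Summable fun n : ℕ ↦
      ‖Complex.exp (2 * π * I * a * (n + 1))‖ / ((n : ℝ) + 1) ^ s.re := by
    have hnorm (n : ℕ) : ‖Complex.exp (2 * π * I * a * (n + 1))‖ = 1 := by
      simp [Complex.norm_exp]
    simp only [hnorm]
    exact_mod_cast (summable_nat_add_iff 1).mpr (Real.summable_one_div_nat_rpow.mpr hs)
  have hmellin := hasSum_mellin (fun n ↦ Or.inr n.cast_add_one_pos) (zero_lt_one.trans hs)
    (fun t ht ↦ hasSum_expZetaKernel a ht) hsum
  have hs_ne : s ≠ 0 := Complex.ne_zero_of_one_lt_re hs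
  have hexp := (hasSum_nat_add_iff' 1).mpr
    ((hasSum_expZeta_of_one_lt_re a hs).mul_left (Complex.Gamma s))
  simp only [Finset.sum_range_one, Nat.cast_zero, Complex.zero_cpow hs_ne, div_zero, mul_zero,
    sub_zero] at hexp
  refine hmellin.unique (hexp.congr_fun fun n ↦ ?_)
  push_cast
  ring

lemma Gamma_mul_expZeta_re (a : ℝ) (hs : 1 < s) :
    Real.Gamma s * (expZeta a s).re =
      ∫ t in Ioi 0, t ^ (s - 1) * (expZetaKernel a t).re := by
  rw [← Complex.re_ofReal_mul, ← Complex.Gamma_ofReal, ← mellin_expZetaKernel a hs]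
  exact clm_mellin_ofReal reCLM (mellinConvergent_expZetaKernel a hs)

lemma Gamma_mul_expZeta_im (a : ℝ) (hs : 1 < s) :
    Real.Gamma s * (expZeta a s).im =
      ∫ t in Ioi 0, t ^ (s - 1) * (expZetaKernel a t).im := by
  rw [← Complex.im_ofReal_mul, ← Complex.Gamma_ofReal, ← mellin_expZetaKernel a hs]
  exact clm_mellin_ofReal imCLM (mellinConvergent_expZetaKernel a hs)

lemma expZeta_im_pos (ha : 0 < a) (ha' : a < 1 / 2) (hs : 1 < s) : 0 < (expZeta a s).im := by
  have hpos : ∀ t ∈ Ioi (0 : ℝ), 0 < t ^ (s - 1) * (expZetaKernel a t).im := fun t ht ↦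
    mul_pos (Real.rpow_pos_of_pos ht _) (expZetaKernel_im_pos ha ha' ht)
  have hint : 0 < ∫ t in Ioi 0, t ^ (s - 1) * (expZetaKernel a t).im := by
    rw [setIntegral_pos_iff_support_of_nonneg_ae
      (ae_restrict_of_forall_mem measurableSet_Ioi fun t ht ↦ (hpos t ht).le)
      (integrableOn_rpow_smul_clm_of_mellinConvergent imCLM (mellinConvergent_expZetaKernel a hs)),
      inter_eq_right.mpr fun t ht ↦ Function.mem_support.mpr (hpos t ht).ne']
    simp
  rw [← Gamma_mul_expZeta_im a hs] at hint
  exact pos_of_mul_pos_right hint (Real.Gamma_pos_of_pos (by linarith)).le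

lemma expZeta_re_nonneg_of_le {s₀ : ℝ} (ha : 0 < Real.cos (2 * π * a)) (hs₀ : 1 < s₀)
    (hs : s₀ ≤ s) (h : 0 ≤ (expZeta a s₀).re) : 0 ≤ (expZeta a s).re := by
  have hs1 : 1 < s := hs₀.trans_le hs
  have hint {r : ℝ} (hr : 1 < r) :
      IntegrableOn (fun t ↦ t ^ (r - 1) * (expZetaKernel a t).re) (Ioi 0) :=
    integrableOn_rpow_smul_clm_of_mellinConvergent reCLM (mellinConvergent_expZetaKernel a hr)
  refine nonneg_of_mul_nonneg_right ?_ (Real.Gamma_pos_of_pos (zero_lt_one.trans hs1))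
  rw [Gamma_mul_expZeta_re a hs1]
  refine setIntegral_Ioi_rpow_mul_nonneg_of_sign_change
    (neg_nonneg.mpr (Real.log_nonpos ha.le (Real.cos_le_one _))) (sub_le_sub_right hs 1)
    (fun t _ ↦ expZetaKernel_re_nonpos ha) (fun t _ ↦ expZetaKernel_re_nonneg ha)
    (hint hs₀) (hint hs1) ?_
  rw [← Gamma_mul_expZeta_re a hs₀]
  exact mul_nonneg (Real.Gamma_pos_of_pos (zero_lt_one.trans hs₀)).le h

lemma expZeta_neg_conj (a : ℝ) {s : ℂ} (hs : 1 < s.re) :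
    expZeta (-a : ℝ) (conj s) = conj (expZeta a s) := by
  refine (hasSum_expZeta_of_one_lt_re (-a) (by simpa using hs)).unique
    ((Complex.hasSum_conj'.mpr (hasSum_expZeta_of_one_lt_re a hs)).congr_fun fun n ↦ ?_)
  rw [Complex.cpow_conj _ _ (by simpa only [Complex.natCast_arg] using Real.pi_ne_zero.symm),
    Complex.conj_natCast, map_div₀, ← Complex.exp_conj]
  simp [map_ofNat]

lemma hurwitzZeta_one_sub_ofReal (a : ℝ) (hs : 1 < s) :
    hurwitzZeta a ((1 - s : ℝ) : ℂ) = ((2 * (2 * π) ^ (-s) * Real.Gamma s *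
      (Real.cos (π * s / 2) * (expZeta a s).re + Real.sin (π * s / 2) * (expZeta a s).im) : ℝ) :
        ℂ) := by
  have hpole (n : ℕ) : (s : ℂ) ≠ -n := by
    have := n.cast_nonneg (α := ℝ)
    exact_mod_cast (by linarith : -(n : ℝ) < s).ne'
  have hconj : expZeta (-(a : UnitAddCircle)) s = conj (expZeta a s) := by
    simpa only [Complex.conj_ofReal] using! expZeta_neg_conj a (s := s) hs
  set E := expZeta a s
  set w := Complex.exp ((π * s / 2 : ℝ) * I) with hw
  have hexp : Complex.exp (π * I * s / 2) = w := by
    rw [hw]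
    push_cast
    ring_nf
  have hexp_neg : Complex.exp (-π * I * s / 2) = conj w := by
    rw [← hexp, ← Complex.exp_conj]
    simp [map_ofNat]
  have hreal : conj w * E + w * conj E =
      ((2 * (Real.cos (π * s / 2) * E.re + Real.sin (π * s / 2) * E.im) : ℝ) : ℂ) := by
    rw [← Complex.conj_conj w, ← map_mul, Complex.conj_conj, Complex.add_conj, Complex.mul_re,
      Complex.conj_re, Complex.conj_im, Complex.exp_ofReal_mul_I_re,
      Complex.exp_ofReal_mul_I_im, neg_mul, sub_neg_eq_add]
  have hpow : ((2 * π : ℂ) ^ (-s : ℂ)) = ((2 * π) ^ (-s) : ℝ) := by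
    rw [Complex.ofReal_cpow (by positivity)]
    push_cast
    rfl
  rw [Complex.ofReal_sub, Complex.ofReal_one,
    hurwitzZeta_one_sub _ hpole (Or.inr (by exact_mod_cast hs.ne')), hconj, hexp, hexp_neg, hreal,
    hpow, Complex.Gamma_ofReal, ← Complex.ofReal_mul, ← Complex.ofReal_mul]
  ring_nf

-- The functional equation at `s = 2` turns this into the value `ζ(-1, a) = -B₂(a) / 2`.
lemma expZeta_two_re (ha : a ∈ Icc 0 1) :
    (expZeta a 2).re = π ^ 2 * (a ^ 2 - a + 1 / 6) := by
  have hbernoulli : ((Polynomial.bernoulli 2).map (algebraMap ℚ ℂ)).eval (a : ℂ) =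
      a ^ 2 - a + 1 / 6 := by
    simp only [Polynomial.bernoulli, Finset.sum_range_succ, Finset.sum_range_zero,
      Polynomial.map_add, Polynomial.map_monomial, Polynomial.eval_add, Polynomial.eval_monomial,
      bernoulli_zero, bernoulli_one, bernoulli_two]
    norm_num
    ring
  have hvalue : hurwitzZeta a ((1 - 2 : ℝ) : ℂ) = ((-(1 / 2) * (a ^ 2 - a + 1 / 6) : ℝ) : ℂ) := by
    have h := hurwitzZeta_neg_nat one_ne_zero ha
    rw [hbernoulli] at h
    convert! h using 2 <;> norm_num
  have hfunctional := hurwitzZeta_one_sub_ofReal a (s := 2) one_lt_two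
  rw [hvalue, Complex.ofReal_inj, mul_div_cancel_right₀ π two_ne_zero, Real.cos_pi, Real.sin_pi,
    Real.Gamma_two, Real.rpow_neg (by positivity), Real.rpow_two, Complex.ofReal_ofNat]
    at hfunctional
  field_simp at hfunctional
  linarith

end ExpZeta

lemma sq_sub_self_add_one_sixth_nonneg {a : ℝ} (ha : a ≤ (3 - √3) / 6) : 0 ≤ a ^ 2 - a + 1 / 6 := by
  have hsq : √3 ^ 2 = 3 := Real.sq_sqrt (by norm_num)
  have hfactor : a ^ 2 - a + 1 / 6 = ((3 - √3) / 6 - a) * ((3 + √3) / 6 - a) := by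
    linear_combination hsq / 36
  have hsqrt := Real.sqrt_nonneg 3
  rw [hfactor]
  exact mul_nonneg (by linarith) (by linarith)

lemma three_sub_sqrt_three_div_six_lt_one_fourth : (3 - √3) / 6 < 1 / 4 := by
  have : 3 / 2 < √3 := Real.lt_sqrt_of_sq_lt (by norm_num)
  linarith

lemma cos_pi_mul_div_two_nonpos (k : ℕ) {s : ℝ} (hs : 4 * k + 1 ≤ s) (hs' : s ≤ 4 * k + 3) :
    Real.cos (π * s / 2) ≤ 0 := by
  rw [← Real.cos_sub_nat_mul_two_pi _ k]
  exact Real.cos_nonpos_of_pi_div_two_le_of_le (by nlinarith [pi_pos]) (by nlinarith [pi_pos])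

lemma sin_pi_mul_div_two_neg (k : ℕ) {s : ℝ} (hs : 4 * k + 2 < s) (hs' : s < 4 * k + 4) :
    Real.sin (π * s / 2) < 0 := by
  rw [← Real.sin_sub_nat_mul_two_pi _ (k + 1)]
  push_cast
  exact Real.sin_neg_of_neg_of_neg_pi_lt (by nlinarith [pi_pos]) (by nlinarith [pi_pos])

theorem hurwitzZeta_neg_on_Ioo_neg_two_neg_one_general {a : ℝ} (ha : 0 < a)
    (ha' : a ≤ (3 - √3) / 6) (k : ℕ) {σ : ℝ} (hσ : -(4 * k + 2) ≤ σ) (hσ' : σ < -(4 * k + 1)) :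
    (hurwitzZeta a σ).im = 0 ∧ (hurwitzZeta a σ).re < 0 := by
  obtain ⟨s, rfl⟩ : ∃ s : ℝ, σ = 1 - s := ⟨1 - σ, by ring⟩
  have : (0 : ℝ) ≤ k := k.cast_nonneg
  have ha4 : a < 1 / 4 := ha'.trans_lt three_sub_sqrt_three_div_six_lt_one_fourth
  have hcosa : 0 < Real.cos (2 * π * a) :=
    Real.cos_pos_of_mem_Ioo ⟨by nlinarith [pi_pos], by nlinarith [pi_pos]⟩
  have hre_two : 0 ≤ (expZeta a (2 : ℝ)).re := by
    rw [Complex.ofReal_ofNat, expZeta_two_re ⟨ha.le, by linarith⟩]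
    exact mul_nonneg (by positivity) (sq_sub_self_add_one_sixth_nonneg ha')
  have hre : 0 ≤ (expZeta a s).re :=
    expZeta_re_nonneg_of_le hcosa one_lt_two (by linarith) hre_two
  have him : 0 < (expZeta a s).im := expZeta_im_pos ha (by linarith) (by linarith)
  have hcos := cos_pi_mul_div_two_nonpos k (s := s) (by linarith) (by linarith)
  have hsin := sin_pi_mul_div_two_neg k (s := s) (by linarith) (by linarith)
  have hΓ : 0 < Real.Gamma s := Real.Gamma_pos_of_pos (by linarith)
  rw [hurwitzZeta_one_sub_ofReal a (by linarith), Complex.ofReal_im, Complex.ofReal_re]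
  exact ⟨rfl, mul_neg_of_pos_of_neg (by positivity) (add_neg_of_nonpos_of_neg
    (mul_nonpos_of_nonpos_of_nonneg hcos hre) (mul_neg_of_neg_of_pos hsin him))⟩

/-- If `0 < a ≤ (3 - √3)/6`, then `ζ(σ, a) < 0` for every real `σ ∈ (-2, -1)`. -/
theorem hurwitzZeta_neg_on_Ioo_neg_two_neg_one (a : ℝ) (ha : 0 < a)
    (ha' : a ≤ (3 - Real.sqrt 3) / 6) :
    ∀ σ : ℝ, -2 < σ → σ < -1 →
      (hurwitzZeta (a : UnitAddCircle) (σ : ℂ)).im = 0 ∧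
        (hurwitzZeta (a : UnitAddCircle) (σ : ℂ)).re < 0 := by
  intro σ hσ hσ'
  exact hurwitzZeta_neg_on_Ioo_neg_two_neg_one_general ha ha' 0 (by simpa using hσ.le)
    (by simpa using hσ')
end
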